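/- arXiv:1105.1067 — 11 statements merged into one kernel-verified Lean document; each statement's English description precedes it below -/
import Mathlib

section
/- Let Θ = (α,β,γ) be an isotopism of order n, and let I be the ideal of the polynomial ring ℚ[x_{ijk} : i,j,k ∈ {1,...,n}] generated by the polynomials ∑_{i=1}^n x_{ijk} − 1 for all j,k; ∑_{j=1}^n x_{ijk} − 1 for all i,k; ∑_{k=1}^n x_{ijk} − 1 for all i,j; x_{ijk}·(x_{ijk} − 1) for all i,j,k; and x_{ijk} − x_{α(i)β(j)γ(k)} for all i,j,k. Then the dimension of the quotient ring ℚ[x_{ijk}]/I as a vector space over ℚ equals Δ(Θ), the number of Latin squares of order n having Θ as an autotopism. -/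
open MvPolynomial

/-- A Latin square of order `n`: each row and each column is a bijection. -/
def IsLatinSquare {n : ℕ} (L : Fin n → Fin n → Fin n) : Prop :=
  (∀ i, Function.Bijective (L i)) ∧ (∀ j, Function.Bijective fun i => L i j)

/-- `(α, β, γ)` is an autotopism of the Latin square `L`. -/
def IsAutotopism {n : ℕ} (α β γ : Equiv.Perm (Fin n)) (L : Fin n → Fin n → Fin n) : Prop :=
  ∀ i j, L (α i) (β j) = γ (L i j)

namespace LSQ

variable {σ : Type*} [Fintype σ] [DecidableEq σ]

/-- The 0/1 point attached to a finset. -/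
def pt (t : Finset σ) : σ → ℚ := fun s => if s ∈ t then 1 else 0

/-- The indicator polynomial. -/
noncomputable def e (t : Finset σ) : MvPolynomial σ ℚ :=
  (∏ i ∈ t, X i) * ∏ i ∈ Finset.univ \ t, (1 - X i)

lemma sum_e : ∑ t : Finset σ, e t = 1 := by
  have h := Finset.prod_add (fun i : σ => (X i : MvPolynomial σ ℚ)) (fun i => 1 - X i) Finset.univ
  simp only [add_sub_cancel, Finset.prod_const_one, Finset.powerset_univ] at h
  exact h.symm

lemma eval_e (t u : Finset σ) : eval (pt u) (e t) = if t = u then 1 else 0 := by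
  simp only [e, map_mul, map_prod, eval_X, map_sub, map_one]
  split_ifs with h
  · subst h
    rw [Finset.prod_eq_one, Finset.prod_eq_one, one_mul]
    · intro i hi
      simp at hi
      simp [pt, hi]
    · intro i hi
      simp [pt, hi]
  · by_cases h1 : t ⊆ u
    · obtain ⟨i, hi, hi'⟩ : ∃ i ∈ u, i ∉ t := by
        by_contra! hc
        exact h (Finset.Subset.antisymm h1 hc)
      apply mul_eq_zero_of_right
      exact Finset.prod_eq_zero (i := i) (by simp [hi']) (by simp [pt, hi])
    · obtain ⟨i, hi, hi'⟩ := Finset.not_subset.1 h1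
      apply mul_eq_zero_of_left
      exact Finset.prod_eq_zero hi (by simp [pt, hi'])

lemma X_mul_e (I : Ideal (MvPolynomial σ ℚ)) (hI : ∀ s, X s * (X s - 1) ∈ I) (t : Finset σ) (s : σ) :
    X s * e t - C (pt t s) * e t ∈ I := by
  by_cases h : s ∈ t
  · have : e t = X s * ((∏ i ∈ t.erase s, X i) * ∏ i ∈ Finset.univ \ t, (1 - X i)) := by
      rw [e, ← Finset.mul_prod_erase t _ h]; ring
    rw [this]
    simp only [pt, h, if_true, map_one]
    convert I.mul_mem_left ((∏ i ∈ t.erase s, X i) * ∏ i ∈ Finset.univ \ t, (1 - X i)) (hI s)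
      using 1
    ring
  · have h' : s ∈ Finset.univ \ t := by simp [h]
    have : e t = (1 - X s) * ((∏ i ∈ t, X i) * ∏ i ∈ (Finset.univ \ t).erase s, (1 - X i)) := by
      rw [e, ← Finset.mul_prod_erase _ _ h']; ring
    rw [this]
    simp only [pt, h, if_false, map_zero]
    convert I.mul_mem_left (-((∏ i ∈ t, X i) * ∏ i ∈ (Finset.univ \ t).erase s, (1 - X i))) (hI s)
      using 1
    ring

lemma mul_e (I : Ideal (MvPolynomial σ ℚ)) (hI : ∀ s, X s * (X s - 1) ∈ I) (t : Finset σ)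
    (p : MvPolynomial σ ℚ) : p * e t - C (eval (pt t) p) * e t ∈ I := by
  induction p using MvPolynomial.induction_on with
  | C a => simp
  | add p q hp hq =>
    convert I.add_mem hp hq using 1
    simp only [map_add]; ring
  | mul_X p s hp =>
    convert I.add_mem (I.mul_mem_left (X s) hp)
      (I.mul_mem_left (C (eval (pt t) p)) (X_mul_e I hI t s)) using 1
    simp only [map_mul, eval_X]; ring

lemma mem_of_vanish (I : Ideal (MvPolynomial σ ℚ)) (hI : ∀ s, X s * (X s - 1) ∈ I)
    (p : MvPolynomial σ ℚ)
    (hp : ∀ t, (∀ q ∈ I, eval (pt t) q = 0) → eval (pt t) p = 0) : p ∈ I := by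
  rw [← mul_one p, ← sum_e, Finset.mul_sum]
  refine I.sum_mem fun t _ => ?_
  by_cases h : ∀ q ∈ I, eval (pt t) q = 0
  · have := mul_e I hI t p
    simpa [hp t h] using this
  · push Not at h
    obtain ⟨q, hq, hne⟩ := h
    have h1 := I.sub_mem (I.mul_mem_right (e t) hq) (mul_e I hI t q)
    rw [sub_sub_cancel] at h1
    have h2 := I.mul_mem_left (p * C (eval (pt t) q)⁻¹) h1
    convert h2 using 1
    have : (C (eval (pt t) q)⁻¹ * C (eval (pt t) q) : MvPolynomial σ ℚ) = 1 := by
      rw [← C_mul, inv_mul_cancel₀ hne, C_1]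
    linear_combination (-p * e t) * this

/-- The evaluation map at the points of the variety. -/
noncomputable def ev (I : Ideal (MvPolynomial σ ℚ)) :
    MvPolynomial σ ℚ →ₐ[ℚ] ({t : Finset σ // ∀ q ∈ I, eval (pt t) q = 0} → ℚ) :=
  AlgHom.pi fun t => aeval (pt t.1)

lemma ev_apply (I : Ideal (MvPolynomial σ ℚ)) (p) (t) : ev I p t = eval (pt t.1) p := by
  simp [ev, aeval_eq_eval]

lemma ev_surj (I : Ideal (MvPolynomial σ ℚ)) : Function.Surjective (ev I) := by
  classical
  intro f
  refine ⟨∑ t, C (f t) * e t.1, ?_⟩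
  funext u
  rw [ev_apply]
  simp only [map_sum, map_mul, eval_C, eval_e, mul_ite, mul_one, mul_zero, ← Subtype.ext_iff]
  simp

theorem finrank_eq (I : Ideal (MvPolynomial σ ℚ)) (hI : ∀ s, X s * (X s - 1) ∈ I) :
    Module.finrank ℚ (MvPolynomial σ ℚ ⧸ I) =
      Nat.card {t : Finset σ // ∀ q ∈ I, eval (pt t) q = 0} := by
  classical
  have hk : RingHom.ker (ev I) = I := by
    ext p
    rw [RingHom.mem_ker]
    constructor
    · intro h
      refine mem_of_vanish I hI p fun t ht => ?_
      have := congrFun h ⟨t, ht⟩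
      rwa [ev_apply] at this
    · intro h
      funext t
      rw [ev_apply]
      exact t.2 p h
  have e1 := Ideal.quotientKerAlgEquivOfSurjective (ev_surj I)
  have e2 := Ideal.quotientEquivAlgOfEq ℚ hk
  rw [(e2.symm.trans e1).toLinearEquiv.finrank_eq, Module.finrank_fintype_fun_eq_card,
    Nat.card_eq_fintype_card]

lemma exu {n : ℕ} (f : Fin n → Prop) [DecidablePred f] :
    (∑ i, (if f i then (1 : ℚ) else 0)) - 1 = 0 ↔ ∃! i, f i := by
  rw [Finset.sum_boole, sub_eq_zero, Nat.cast_eq_one, Finset.card_eq_one]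
  constructor
  · rintro ⟨a, ha⟩
    have := fun i => Finset.ext_iff.1 ha i
    simp at this
    exact ⟨a, (this a).2 rfl, fun i hi => (this i).1 hi⟩
  · rintro ⟨a, ha, hu⟩
    refine ⟨a, ?_⟩
    ext i
    simp
    exact ⟨hu i, fun h => h ▸ ha⟩

/-- Combinatorial description of the points. -/
def Good {n : ℕ} (α β γ : Equiv.Perm (Fin n)) (t : Finset (Fin n × Fin n × Fin n)) : Prop :=
  (∀ j k, ∃! i, (i, j, k) ∈ t) ∧ (∀ i k, ∃! j, (i, j, k) ∈ t) ∧ (∀ i j, ∃! k, (i, j, k) ∈ t) ∧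
    ∀ i j k, (i, j, k) ∈ t ↔ (α i, β j, γ k) ∈ t

/-- The graph of a square. -/
def graph {n : ℕ} (L : Fin n → Fin n → Fin n) : Finset (Fin n × Fin n × Fin n) :=
  Finset.univ.filter fun x => L x.1 x.2.1 = x.2.2

lemma mem_graph {n : ℕ} (L : Fin n → Fin n → Fin n) (i j k) : (i, j, k) ∈ graph L ↔ L i j = k := by
  simp [graph]

lemma good_graph {n : ℕ} (α β γ : Equiv.Perm (Fin n)) (L : Fin n → Fin n → Fin n) :
    Good α β γ (graph L) ↔ IsLatinSquare L ∧ IsAutotopism α β γ L := by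
  simp only [Good, mem_graph, IsLatinSquare, IsAutotopism, Function.bijective_iff_existsUnique]
  constructor
  · rintro ⟨h1, h2, -, h4⟩
    exact ⟨⟨h2, h1⟩, fun i j => (h4 i j _).1 rfl⟩
  · rintro ⟨⟨h2, h1⟩, h4⟩
    refine ⟨h1, h2, fun i j => ⟨_, rfl, fun _ h => h.symm⟩, fun i j k => ?_⟩
    rw [h4, γ.injective.eq_iff]

lemma card_good {n : ℕ} (α β γ : Equiv.Perm (Fin n)) :
    Nat.card {L : Fin n → Fin n → Fin n // IsLatinSquare L ∧ IsAutotopism α β γ L} =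
      Nat.card {t // Good α β γ t} := by
  refine Nat.card_eq_of_bijective
    (fun L => (⟨graph L.1, (good_graph α β γ L.1).2 L.2⟩ : {t // Good α β γ t})) ⟨?_, ?_⟩
  · rintro ⟨L, hL⟩ ⟨M, hM⟩ h
    have h' : graph L = graph M := congrArg Subtype.val h
    apply Subtype.ext
    funext i j
    have := (mem_graph L i j (L i j)).2 rfl
    rw [h', mem_graph] at this
    exact this.symm
  · rintro ⟨t, ht⟩
    choose L hL hu using ht.2.2.1
    have hg : graph L = t := by
      ext ⟨i, j, k⟩
      rw [mem_graph]
      exact ⟨fun h => h ▸ hL i j, fun h => (hu i j k h).symm⟩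
    exact ⟨⟨L, (good_graph α β γ L).1 (hg ▸ ht)⟩, Subtype.ext hg⟩

end LSQ

theorem finrank_quotient_eq_card_latinSquares_autotopism
    (n : ℕ) (α β γ : Equiv.Perm (Fin n)) :
    Module.finrank ℚ
      (MvPolynomial (Fin n × Fin n × Fin n) ℚ ⧸
        Ideal.span
          ({p : MvPolynomial (Fin n × Fin n × Fin n) ℚ | ∃ j k, p = (∑ i, X (i, j, k)) - 1} ∪
           {p | ∃ i k, p = (∑ j, X (i, j, k)) - 1} ∪
           {p | ∃ i j, p = (∑ k, X (i, j, k)) - 1} ∪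
           {p | ∃ i j k, p = X (i, j, k) * (X (i, j, k) - 1)} ∪
           {p | ∃ i j k, p = X (i, j, k) - X (α i, β j, γ k)})) =
      Nat.card {L : Fin n → Fin n → Fin n // IsLatinSquare L ∧ IsAutotopism α β γ L} := by
  rw [LSQ.finrank_eq, LSQ.card_good]
  · refine Nat.card_congr (Equiv.subtypeEquivRight fun t => ?_)
    have key : ∀ S : Set (MvPolynomial (Fin n × Fin n × Fin n) ℚ),
        (∀ q ∈ Ideal.span S, eval (LSQ.pt t) q = 0) ↔ ∀ q ∈ S, eval (LSQ.pt t) q = 0 := by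
      intro S
      exact Ideal.span_le (I := RingHom.ker (eval (LSQ.pt t)))
    rw [key]
    have hs : ∀ i j k i' j' k', LSQ.pt t (i, j, k) - LSQ.pt t (i', j', k') = 0 ↔
        ((i, j, k) ∈ t ↔ (i', j', k') ∈ t) := by
      intro i j k i' j' k'
      simp only [LSQ.pt]
      by_cases h1 : (i, j, k) ∈ t <;> by_cases h2 : (i', j', k') ∈ t <;> simp [h1, h2]
    constructor
    · intro h
      refine ⟨fun j k => ?_, fun i k => ?_, fun i j => ?_, fun i j k => ?_⟩
      · have := h _ (Or.inl (Or.inl (Or.inl (Or.inl ⟨j, k, rfl⟩))))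
        simp only [map_sub, map_sum, eval_X, map_one, LSQ.pt] at this
        exact (LSQ.exu _).1 this
      · have := h _ (Or.inl (Or.inl (Or.inl (Or.inr ⟨i, k, rfl⟩))))
        simp only [map_sub, map_sum, eval_X, map_one, LSQ.pt] at this
        exact (LSQ.exu _).1 this
      · have := h _ (Or.inl (Or.inl (Or.inr ⟨i, j, rfl⟩)))
        simp only [map_sub, map_sum, eval_X, map_one, LSQ.pt] at this
        exact (LSQ.exu _).1 this
      · have := h _ (Or.inr ⟨i, j, k, rfl⟩)
        simp only [map_sub, eval_X] at this
        exact (hs _ _ _ _ _ _).1 this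
    · rintro ⟨h1, h2, h3, h4⟩ q ((((⟨j, k, rfl⟩ | ⟨i, k, rfl⟩) | ⟨i, j, rfl⟩) | ⟨i, j, k, rfl⟩) |
        ⟨i, j, k, rfl⟩)
      · simp only [map_sub, map_sum, eval_X, map_one, LSQ.pt]
        exact (LSQ.exu _).2 (h1 j k)
      · simp only [map_sub, map_sum, eval_X, map_one, LSQ.pt]
        exact (LSQ.exu _).2 (h2 i k)
      · simp only [map_sub, map_sum, eval_X, map_one, LSQ.pt]
        exact (LSQ.exu _).2 (h3 i j)
      · simp only [map_sub, map_mul, eval_X, map_one, LSQ.pt]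
        split_ifs <;> simp
      · simp only [map_sub, eval_X]
        exact (hs _ _ _ _ _ _).2 (h4 i j k)
  · rintro ⟨i, j, k⟩
    exact Ideal.subset_span (Or.inl (Or.inr ⟨i, j, k, rfl⟩))
end

section
/- Let Θ = (α,β,γ) be an isotopism of order n and let L₁, L₂ be Latin squares of order n both having Θ as an autotopism. If L₁(i,j) = L₂(i,j) for all (i,j) ∈ S_Θ, then L₁ = L₂. In other words, a Latin square in LS(Θ) is completely determined by its entries on the set S_Θ. -/
/-- `i` is a cycle leader of `δ`, i.e. the minimum of its orbit under `δ`. -/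
def IsCycleLeader {n : ℕ} (δ : Equiv.Perm (Fin n)) (i : Fin n) : Prop :=
  ∀ m : ℤ, i ≤ (δ ^ m) i

/-- The set `S_Θ` of multi-indices associated with the isotopism `Θ = (α, β, γ)`. -/
def STheta {n : ℕ} (α β : Equiv.Perm (Fin n)) : Set (Fin n × Fin n) :=
  {p | IsCycleLeader α p.1 ∧ (α p.1 = p.1 → IsCycleLeader β p.2)}

theorem aut_zpow {n : ℕ} {α β γ : Equiv.Perm (Fin n)} {L : Fin n → Fin n → Fin n}
    (h : IsAutotopism α β γ L) (m : ℤ) : IsAutotopism (α ^ m) (β ^ m) (γ ^ m) L := by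
  induction m using Int.induction_on with
  | zero => intro i j; simp
  | succ k ih =>
    intro i j
    rw [zpow_add_one, zpow_add_one, zpow_add_one]
    simp only [Equiv.Perm.mul_apply]
    rw [ih, h]
  | pred k ih =>
    intro i j
    rw [zpow_sub_one, zpow_sub_one, zpow_sub_one]
    simp only [Equiv.Perm.mul_apply]
    rw [ih]
    congr 1
    have := h (α⁻¹ i) (β⁻¹ j)
    rw [← Equiv.Perm.mul_apply, ← Equiv.Perm.mul_apply, mul_inv_cancel, mul_inv_cancel] at this
    simp only [Equiv.Perm.one_apply] at this
    rw [this, ← Equiv.Perm.mul_apply, inv_mul_cancel, Equiv.Perm.one_apply]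

theorem exists_leader {n : ℕ} (δ : Equiv.Perm (Fin n)) (i : Fin n) :
    ∃ m : ℤ, IsCycleLeader δ ((δ ^ m) i) := by
  obtain ⟨x, ⟨m, rfl⟩, hx⟩ := Set.exists_min_image (Set.range fun m : ℤ => (δ ^ m) i) id
    (Set.toFinite _) ⟨_, 0, rfl⟩
  refine ⟨m, fun k => ?_⟩
  have := hx _ ⟨k + m, rfl⟩
  simpa [zpow_add] using this

theorem latinSquare_autotopism_determined_by_STheta
    (n : ℕ) (α β γ : Equiv.Perm (Fin n)) (L₁ L₂ : Fin n → Fin n → Fin n)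
    (h₁ : IsLatinSquare L₁) (h₂ : IsLatinSquare L₂)
    (ha₁ : IsAutotopism α β γ L₁) (ha₂ : IsAutotopism α β γ L₂)
    (h : ∀ i j, (i, j) ∈ STheta α β → L₁ i j = L₂ i j) :
    L₁ = L₂ := by
  have key : ∀ (m : ℤ) i j, L₁ ((α ^ m) i) ((β ^ m) j) = L₂ ((α ^ m) i) ((β ^ m) j) →
      L₁ i j = L₂ i j := by
    intro m i j e
    rw [aut_zpow ha₁ m, aut_zpow ha₂ m] at e
    exact (γ ^ m).injective e
  funext i j
  obtain ⟨m, hm⟩ := exists_leader α i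
  apply key m
  generalize (α ^ m) i = i0 at *
  generalize (β ^ m) j = j0 at *
  by_cases hf : α i0 = i0
  · obtain ⟨k, hk⟩ := exists_leader β j0
    apply key k
    rw [Equiv.Perm.zpow_apply_eq_self_of_apply_eq_self hf]
    exact h _ _ ⟨hm, fun _ => hk⟩
  · exact h _ _ ⟨hm, fun e => absurd e hf⟩
end

section
/- Let Θ₁ = (α₁,β₁,γ₁) and Θ₂ = (α₂,β₂,γ₂) be isotopisms of order n such that α₁ and α₂ have the same cycle type, β₁ and β₂ have the same cycle type, and γ₁ and γ₂ have the same cycle type. Then Δ(Θ₁) = Δ(Θ₂), i.e., the number of Latin squares of order n having Θ₁ as an autotopism equals the number of Latin squares of order n having Θ₂ as an autotopism. -/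
/-- `Δ(Θ)`: the number of Latin squares of order `n` admitting `(α, β, γ)` as autotopism. -/
noncomputable def Delta {n : ℕ} (α β γ : Equiv.Perm (Fin n)) : ℕ :=
  Nat.card {L : Fin n → Fin n → Fin n // IsLatinSquare L ∧ IsAutotopism α β γ L}

theorem delta_conj_aux {n : ℕ} (a b c α β γ : Equiv.Perm (Fin n)) {L : Fin n → Fin n → Fin n}
    (h : IsLatinSquare L ∧ IsAutotopism α β γ L) :
    IsLatinSquare (fun i j => c (L (a⁻¹ i) (b⁻¹ j))) ∧
      IsAutotopism (a * α * a⁻¹) (b * β * b⁻¹) (c * γ * c⁻¹)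
        (fun i j => c (L (a⁻¹ i) (b⁻¹ j))) := by
  obtain ⟨⟨h1, h2⟩, h3⟩ := h
  refine ⟨⟨fun i => ?_, fun j => ?_⟩, fun i j => ?_⟩
  · exact c.bijective.comp ((h1 (a⁻¹ i)).comp (b⁻¹).bijective)
  · exact c.bijective.comp ((h2 (b⁻¹ j)).comp (a⁻¹).bijective)
  · have := h3 (a⁻¹ i) (b⁻¹ j)
    simp [Equiv.Perm.mul_apply] at this ⊢
    exact this

theorem delta_le_aux {n : ℕ} (α₁ β₁ γ₁ α₂ β₂ γ₂ : Equiv.Perm (Fin n))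
    (hα : α₁.cycleType = α₂.cycleType)
    (hβ : β₁.cycleType = β₂.cycleType)
    (hγ : γ₁.cycleType = γ₂.cycleType) :
    Delta α₁ β₁ γ₁ ≤ Delta α₂ β₂ γ₂ := by
  obtain ⟨a, rfl⟩ := isConj_iff.1 (Equiv.Perm.isConj_iff_cycleType_eq.2 hα)
  obtain ⟨b, rfl⟩ := isConj_iff.1 (Equiv.Perm.isConj_iff_cycleType_eq.2 hβ)
  obtain ⟨c, rfl⟩ := isConj_iff.1 (Equiv.Perm.isConj_iff_cycleType_eq.2 hγ)
  refine Nat.card_le_card_of_injective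
    (fun L => ⟨_, delta_conj_aux a b c α₁ β₁ γ₁ L.2⟩) ?_
  intro L M h
  apply Subtype.ext
  funext i j
  have := congrFun (congrFun (congrArg Subtype.val h) (a i)) (b j)
  simpa using this

theorem delta_eq_of_same_cycleType (n : ℕ)
    (α₁ β₁ γ₁ α₂ β₂ γ₂ : Equiv.Perm (Fin n))
    (hα : α₁.cycleType = α₂.cycleType)
    (hβ : β₁.cycleType = β₂.cycleType)
    (hγ : γ₁.cycleType = γ₂.cycleType) :
    Delta α₁ β₁ γ₁ = Delta α₂ β₂ γ₂ := by
  exact le_antisymm (delta_le_aux _ _ _ _ _ _ hα hβ hγ)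
    (delta_le_aux _ _ _ _ _ _ hα.symm hβ.symm hγ.symm)
end

section
/- Let α, β, γ be permutations of {1,...,8} such that α and β are 8-cycles (cycle type {8}) and γ is a product of two disjoint 4-cycles (cycle type {4,4}). Then the number of Latin squares of order 8 having Θ = (α,β,γ) as an autotopism is 1152. -/
def cnt : ℕ → ℕ → ℕ → ℕ
  | 0, _, _ => 1
  | k+1, M, N => Nat.rec (motive := fun _ => ℕ) 0 (fun v s => s + (cond (M.testBit v) 0 (cond (N.testBit ((v+6*k)%8)) 0
      (cnt k (M ||| 2^v) (N ||| 2^((v+6*k)%8)))))) 8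

theorem cnt_eq : cnt 8 0 0 = 1152 := by decide +kernel

def ok (k M N : ℕ) (f : Fin k → Fin 8) : Prop :=
  Function.Injective f ∧ Function.Injective (fun i : Fin k => ((f i).val + 6 * i.val) % 8) ∧
  (∀ i, M.testBit (f i).val = false) ∧ (∀ i : Fin k, N.testBit (((f i).val + 6 * i.val) % 8) = false)

theorem ok_snoc (k M N : ℕ) (f : Fin k → Fin 8) (v : Fin 8) :
    ok (k+1) M N (Fin.snoc (α := fun _ => Fin 8) f v) ↔ M.testBit v.val = false ∧ N.testBit ((v.val+6*k)%8) = false ∧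
      ok k (M ||| 2^v.val) (N ||| 2^((v.val+6*k)%8)) f := by
  have e : (fun i : Fin (k+1) => ((Fin.snoc (α := fun _ => Fin 8) f v i).val + 6 * i.val) % 8)
      = Fin.snoc (α := fun _ => ℕ) (fun i : Fin k => ((f i).val + 6 * i.val) % 8) ((v.val+6*k)%8) := by
    funext i
    refine Fin.lastCases ?_ (fun i => ?_) i <;> simp
  unfold ok
  rw [e]
  simp only [Fin.snoc_injective_iff, Fin.forall_fin_succ', Fin.snoc_castSucc, Fin.snoc_last, Nat.testBit_or, Nat.testBit_two_pow, Set.mem_range, not_exists, Bool.or_eq_false_iff, decide_eq_false_iff_not, Fin.val_castSucc, Fin.val_last, forall_and]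
  have : ∀ i, (v.val = (f i).val ↔ f i = v) := fun i => by rw [Fin.ext_iff, eq_comm]
  simp only [this, eq_comm (a := (v.val+6*k)%8)]
  tauto

theorem sum_rec (F : ℕ → ℕ) (n : ℕ) :
    ∑ i : Fin n, F i.val = Nat.rec (motive := fun _ => ℕ) 0 (fun v s => s + F v) n := by
  induction n with
  | zero => rfl
  | succ n ih => rw [Fin.sum_univ_castSucc]; simp [ih]

theorem card_ok (k : ℕ) : ∀ M N, Nat.card {f : Fin k → Fin 8 // ok k M N f} = cnt k M N := by
  induction k with
  | zero =>
    intro M N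
    have : ∀ f, ok 0 M N f := fun f => ⟨fun i => i.elim0, fun i => i.elim0, fun i => i.elim0, fun i => i.elim0⟩
    simp [this, cnt]
  | succ k ih =>
    intro M N
    have e : {f : Fin (k+1) → Fin 8 // ok (k+1) M N f} ≃
        Σ v : Fin 8, {f : Fin k → Fin 8 // ok (k+1) M N (Fin.snoc (α := fun _ => Fin 8) f v)} :=
      ((Fin.snocEquiv (fun _ => Fin 8)).symm.subtypeEquiv (q := fun p => ok (k+1) M N (Fin.snoc (α := fun _ => Fin 8) p.2 p.1)) (fun f => by
        simp [Fin.snocEquiv, Fin.snoc_init_self])).trans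
        (Equiv.subtypeProdEquivSigmaSubtype (fun v f => ok (k+1) M N (Fin.snoc (α := fun _ => Fin 8) f v)))
    have h : ∀ v : Fin 8, Nat.card {f : Fin k → Fin 8 // ok (k+1) M N (Fin.snoc (α := fun _ => Fin 8) f v)}
      = cond (M.testBit v) 0 (cond (N.testBit ((v+6*k)%8)) 0
      (cnt k (M ||| 2^v.val) (N ||| 2^((v.val+6*k)%8)))) := by
      intro v
      simp only [ok_snoc]
      cases h1 : M.testBit v.val
      · cases h2 : N.testBit ((v.val+6*k)%8)
        · simp [ih]
        · simp
      · simp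
    rw [Nat.card_congr e, Nat.card_sigma]
    simp only [h]
    exact sum_rec (fun v => cond (M.testBit v) 0 (cond (N.testBit ((v+6*k)%8)) 0
      (cnt k (M ||| 2^v) (N ||| 2^((v+6*k)%8))))) 8

theorem ct2 : ((finRotate 8)^2).cycleType = {4,4} := by
  have h : (finRotate 8)^2 = List.formPerm [0,2,4,6] * List.formPerm [1,3,5,7] := by decide
  have h1 : (List.formPerm [(0 : Fin 8),2,4,6]).cycleType = {4} := by
    rw [(List.isCycle_formPerm (by decide) (by decide)).cycleType]; decide
  have h2 : (List.formPerm [(1 : Fin 8),3,5,7]).cycleType = {4} := by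
    rw [(List.isCycle_formPerm (by decide) (by decide)).cycleType]; decide
  have hd : Equiv.Perm.Disjoint (List.formPerm [(0 : Fin 8),2,4,6]) (List.formPerm [1,3,5,7]) := by
    unfold Equiv.Perm.Disjoint; decide
  rw [h, hd.cycleType_mul, h1, h2]
  rfl

theorem ct1 : (finRotate 8).cycleType = {8} := cycleType_finRotate (n := 6)

theorem exists_conj {a b : Equiv.Perm (Fin 8)} (h : a.cycleType = b.cycleType) :
    ∃ s : Equiv.Perm (Fin 8), ∀ i, a (s i) = s (b i) := by
  obtain ⟨c, hc⟩ := isConj_iff.1 ((Equiv.Perm.isConj_iff_cycleType_eq).2 h.symm)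
  exact ⟨c, fun i => by rw [← hc]; simp⟩

theorem rot2 : ∀ i, ((finRotate 8)^2) i = i+2 := by decide

open Fin.NatCast Fin.CommRing in
/-- the standard form of the autotopism condition gives a formula through column zero -/
theorem std_formula (L : Fin 8 → Fin 8 → Fin 8) (h : ∀ i j, L (i+1) (j+1) = L i j + 2) (i j : Fin 8) :
    L i j = L (i-j) 0 + 2*j := by
  have key : ∀ n : ℕ, ∀ i : Fin 8, L (i + (n : Fin 8)) (n : Fin 8) = L i 0 + 2 * (n : Fin 8) := by
    intro n
    induction n with
    | zero => intro i; simp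
    | succ n ih => intro i; push_cast; rw [← add_assoc, h, ih]; ring
  have := key j.val (i-j)
  simpa using this

theorem ok_iff (c : Fin 8 → Fin 8) : ok 8 0 0 c ↔
    Function.Injective c ∧ Function.Injective (fun i => c i + 6 * i) := by
  unfold ok
  have : (fun i : Fin 8 => ((c i).val + 6 * i.val) % 8) = Fin.val ∘ (fun i => c i + 6 * i) := by
    funext i
    simp [Fin.val_add, Fin.val_mul]
  rw [this, Fin.val_injective.of_comp_iff]
  simp

def stdEquiv : {L : Fin 8 → Fin 8 → Fin 8 // IsLatinSquare L ∧ ∀ i j, L (i+1) (j+1) = L i j + 2} ≃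
    {c : Fin 8 → Fin 8 // ok 8 0 0 c} where
  toFun L := ⟨fun i => L.1 i 0, by
    obtain ⟨L, ⟨h1, h2⟩, h⟩ := L
    rw [ok_iff]
    refine ⟨(h2 0).1, fun x y hxy => ?_⟩
    have e : ∀ x : Fin 8, L x 0 + 6 * x = L 0 (-x) := fun x => by
      rw [std_formula L h 0 (-x)]
      have : 0 - -x = x := by simp
      rw [this]
      have : ∀ x : Fin 8, 6 * x = 2 * -x := by decide
      rw [this]
    simp only [e] at hxy
    exact neg_injective ((h1 0).1 hxy)⟩
  invFun c := ⟨fun i j => c.1 (i-j) + 2*j, by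
    obtain ⟨c, hc⟩ := c
    obtain ⟨h1, h2⟩ := (ok_iff c).1 hc
    refine ⟨⟨fun i => Finite.injective_iff_bijective.1 fun x y hxy => ?_,
      fun j => Finite.injective_iff_bijective.1 fun x y hxy => ?_⟩, fun i j => ?_⟩
    · have e : ∀ x : Fin 8, c (i - x) + 2 * x = (c (i-x) + 6 * (i-x)) + 2 * i := fun x => by
        have : ∀ x i : Fin 8, 2 * x = 6 * (i-x) + 2 * i := by decide
        rw [add_assoc, ← this]
      simp only [e] at hxy
      exact sub_right_injective (h2 (add_right_cancel hxy))
    · exact sub_left_injective (h1 (add_right_cancel hxy))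
    · simp only [add_sub_add_right_eq_sub]
      have : ∀ x : Fin 8, 2 * (x + 1) = 2 * x + 2 := by decide
      rw [this, add_assoc]⟩
  left_inv L := by
    apply Subtype.ext
    funext i j
    exact (std_formula L.1 L.2.2 i j).symm
  right_inv c := by
    apply Subtype.ext
    funext i
    simp

theorem delta_88_44 (α β γ : Equiv.Perm (Fin 8))
    (hα : α.cycleType = {8}) (hβ : β.cycleType = {8}) (hγ : γ.cycleType = {4, 4}) :
    Nat.card {L : Fin 8 → Fin 8 → Fin 8 // IsLatinSquare L ∧ IsAutotopism α β γ L} =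
      1152 := by
  obtain ⟨s, hs⟩ := exists_conj (hα.trans ct1.symm)
  obtain ⟨r, hr⟩ := exists_conj (hβ.trans ct1.symm)
  obtain ⟨t, ht⟩ := exists_conj (hγ.trans ct2.symm)
  simp only [rot2] at ht
  have r1 : ∀ i, finRotate 8 i = i + 1 := by decide
  simp only [r1] at hs hr
  rw [← cnt_eq, ← card_ok, ← Nat.card_congr stdEquiv]
  symm
  let E : (Fin 8 → Fin 8 → Fin 8) ≃ (Fin 8 → Fin 8 → Fin 8) :=
    Equiv.arrowCongr s (Equiv.arrowCongr r t)
  have hE : ∀ L i j, E L (s i) (r j) = t (L i j) := fun L i j => by simp [E, Equiv.arrowCongr]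
  refine Nat.card_congr (E.subtypeEquiv fun L => and_congr (and_congr ?_ ?_) ?_)
  · refine Iff.symm ?_
    rw [← s.forall_congr_right]
    refine forall_congr' fun i => ?_
    rw [← Function.Bijective.of_comp_iff _ r.bijective]
    have : E L (s i) ∘ r = t ∘ L i := funext fun j => hE L i j
    rw [this, Function.Bijective.of_comp_iff' t.bijective]
  · refine Iff.symm ?_
    rw [← r.forall_congr_right]
    refine forall_congr' fun j => ?_
    rw [← Function.Bijective.of_comp_iff _ s.bijective]
    have : (fun i => E L i (r j)) ∘ s = t ∘ (fun i => L i j) := funext fun i => hE L i j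
    rw [this, Function.Bijective.of_comp_iff' t.bijective]
  · refine Iff.symm ?_
    unfold IsAutotopism
    rw [← s.forall_congr_right]
    refine forall_congr' fun i => ?_
    rw [← r.forall_congr_right]
    refine forall_congr' fun j => ?_
    rw [hs, hr, hE, hE, ht, t.apply_eq_iff_eq]
end

section
/- Let α, β be permutations of {1,...,8} that are 8-cycles (cycle type {8}) and let γ be the identity permutation of {1,...,8}. Then the number of Latin squares of order 8 having Θ = (α,β,γ) as an autotopism is 40320. -/
theorem perm_apply_inv_aux (σ : Equiv.Perm (Fin 8)) (x : Fin 8) : σ (σ⁻¹ x) = x :=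
  Equiv.apply_symm_apply σ x

theorem cyc8_facts (α : Equiv.Perm (Fin 8)) (hα : α.cycleType = {8}) :
    (∀ x y, ∃ k : ℤ, (α ^ k) x = y) ∧ (∀ (n : ℤ) x, (α ^ n) x = x ↔ (8 : ℤ) ∣ n) := by
  have hc : α.IsCycle := by
    rw [← Equiv.Perm.card_cycleType_eq_one, hα]; rfl
  have ho : orderOf α = 8 := by
    rw [← Equiv.Perm.lcm_cycleType, hα]; rfl
  have hs : α.support = Finset.univ := by
    rw [← Finset.card_eq_iff_eq_univ, ← hc.orderOf, ho]; rfl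
  have hm : ∀ x, α x ≠ x := fun x => by
    rw [← Equiv.Perm.mem_support, hs]; exact Finset.mem_univ x
  refine ⟨fun x y => hc.sameCycle (hm x) (hm y), fun n x => ?_⟩
  have h8 : (8 : ℤ) ∣ n ↔ α ^ n = 1 := by
    rw [← orderOf_dvd_iff_zpow_eq_one, ho]; rfl
  rw [h8]
  constructor
  · intro h
    ext1 y
    obtain ⟨k, rfl⟩ := hc.sameCycle (hm x) (hm y)
    rw [← Equiv.Perm.mul_apply, ← zpow_add, add_comm, zpow_add, Equiv.Perm.mul_apply, h]; rfl
  · intro h; rw [h]; rfl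

theorem delta_88_id (α β γ : Equiv.Perm (Fin 8))
    (hα : α.cycleType = {8}) (hβ : β.cycleType = {8}) (hγ : γ = 1) :
    Nat.card {L : Fin 8 → Fin 8 → Fin 8 // IsLatinSquare L ∧ IsAutotopism α β γ L} =
      40320 := by
  subst hγ
  obtain ⟨ha, ha'⟩ := cyc8_facts α hα
  obtain ⟨hb, hb'⟩ := cyc8_facts β hβ
  choose k hk using ha 0
  -- equality of powers transfers
  have key : ∀ (m n : ℤ) x y, (α ^ m) x = (α ^ n) x ↔ (β ^ m) y = (β ^ n) y := by
    have aux : ∀ (σ : Equiv.Perm (Fin 8)) (m n : ℤ) x,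
        (σ ^ m) x = (σ ^ n) x ↔ (σ ^ (m - n)) x = x := by
      intro σ m n x
      rw [show m - n = -n + m by ring, zpow_add, Equiv.Perm.mul_apply, zpow_neg,
        Equiv.Perm.inv_eq_iff_eq]
    intro m n x y
    rw [aux, aux, ha', hb']
  have hz : ∀ L : Fin 8 → Fin 8 → Fin 8, IsAutotopism α β 1 L →
      ∀ (n : ℤ) i j, L ((α ^ n) i) ((β ^ n) j) = L i j := by
    intro L hL n
    induction n using Int.induction_on with
    | zero => intro i j; rfl
    | succ n ih =>
      intro i j
      rw [zpow_add_one, zpow_add_one, Equiv.Perm.mul_apply, Equiv.Perm.mul_apply, ih]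
      exact hL i j
    | pred n ih =>
      intro i j
      rw [zpow_sub_one, zpow_sub_one, Equiv.Perm.mul_apply, Equiv.Perm.mul_apply, ih]
      have := hL (α⁻¹ i) (β⁻¹ j)
      simpa using this.symm
  let f : {L : Fin 8 → Fin 8 → Fin 8 // IsLatinSquare L ∧ IsAutotopism α β 1 L} →
      Equiv.Perm (Fin 8) := fun L => Equiv.ofBijective (L.1 0) (L.2.1.1 0)
  have hf : Function.Bijective f := by
    constructor
    · rintro ⟨L, hL, hA⟩ ⟨M, hM, hB⟩ h
      have h0 : ∀ j, L 0 j = M 0 j := fun j => congrArg (fun e : Equiv.Perm (Fin 8) => e j) h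
      apply Subtype.ext
      funext i j
      change L i j = M i j
      have h1 := hz L hA (k i) 0 ((β ^ (k i))⁻¹ j)
      have h2 := hz M hB (k i) 0 ((β ^ (k i))⁻¹ j)
      rw [hk, perm_apply_inv_aux] at h1 h2
      rw [h1, h2, h0]
    · intro p
      refine ⟨⟨fun i j => p ((β ^ (k i))⁻¹ j), ⟨fun i => ?_, fun j => ?_⟩, fun i j => ?_⟩, ?_⟩
      · exact p.bijective.comp ((β ^ (k i))⁻¹).bijective
      · apply Finite.injective_iff_bijective.1
        intro i i' h
        have h := p.injective h
        -- common point
        have h2 : (β ^ (k i)) ((β ^ (k i))⁻¹ j) = (β ^ (k i')) ((β ^ (k i))⁻¹ j) := by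
          rw [perm_apply_inv_aux]
          rw [h, perm_apply_inv_aux]
        have := (key _ _ 0 _).2 h2
        rwa [hk, hk] at this
      · change p _ = p _
        congr 1
        rw [Equiv.Perm.inv_eq_iff_eq]
        have h3 : (α ^ (k (α i))) 0 = (α ^ (1 + k i)) 0 := by
          rw [hk, zpow_add, Equiv.Perm.mul_apply, hk, zpow_one]
        rw [(key _ _ 0 _).1 h3, zpow_add, Equiv.Perm.mul_apply, perm_apply_inv_aux, zpow_one]
      · ext1 j
        change p ((β ^ (k 0))⁻¹ j) = p j
        congr 1
        rw [Equiv.Perm.inv_eq_iff_eq]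
        have h3 : (α ^ (0:ℤ)) 0 = (α ^ (k 0)) 0 := by rw [hk]; rfl
        exact (key _ _ 0 _).1 h3
  rw [Nat.card_congr (Equiv.ofBijective f hf), Nat.card_eq_fintype_card, Fintype.card_perm,
    Fintype.card_fin]
  rfl
end

section
/- Let α, β, γ be permutations of {1,...,8} such that α and β are 8-cycles (cycle type {8}) and γ has cycle type {2,2,4} (two disjoint 2-cycles and one 4-cycle, no fixed points... specifically two fixed-point-free 2-cycles and one 4-cycle, i.e., cycle structure with two 2-cycles and one 4-cycle and no fixed points). Then the number of Latin squares of order 8 having Θ = (α,β,γ) as an autotopism is 1408. -/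
/-- inverse powers of the model permutation -/
def lsT (k a : ℕ) : ℕ :=
  (match k % 4 with
    | 0 => 0o76543210
    | 1 => 0o65472301
    | 2 => 0o54763210
    | _ => 0o47652301) >>> (3 * a) % 8

def lsStep (k A B a : ℕ) (r : ℕ → ℕ → ℕ) : ℕ :=
  let b := lsT k a
  match A.testBit a with
  | true => 0
  | false => match B.testBit b with
    | true => 0
    | false => r (A ||| 1 <<< a) (B ||| 1 <<< b)

def lsCnt : ℕ → ℕ → ℕ → ℕ
  | 0, _, _ => 1
  | n+1, A, B =>
    lsStep (7 - n) A B 0 (lsCnt n) + lsStep (7 - n) A B 1 (lsCnt n) +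
    lsStep (7 - n) A B 2 (lsCnt n) + lsStep (7 - n) A B 3 (lsCnt n) +
    lsStep (7 - n) A B 4 (lsCnt n) + lsStep (7 - n) A B 5 (lsCnt n) +
    lsStep (7 - n) A B 6 (lsCnt n) + lsStep (7 - n) A B 7 (lsCnt n)

theorem lsCnt_eq : lsCnt 8 0 0 = 1408 := by decide +kernel

/-- partial transversal-like fillings -/
def LsP (n : ℕ) (p : Fin n → Equiv.Perm (Fin 8)) (A B : ℕ) (f : Fin n → Fin 8) : Prop :=
  Function.Injective f ∧ Function.Injective (fun i => p i (f i)) ∧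
    (∀ i, A.testBit (f i).val = false) ∧ (∀ i, B.testBit (p i (f i)).val = false)

theorem ls_testBit_or (A : ℕ) (a x : Fin 8) :
    (A ||| 1 <<< a.val).testBit x.val = false ↔ A.testBit x.val = false ∧ x ≠ a := by
  rw [Nat.testBit_or, Bool.or_eq_false_iff, Nat.one_shiftLeft, Nat.testBit_two_pow]
  rw [decide_eq_false_iff_not, ne_eq, Fin.ext_iff, eq_comm (a := a.val)]

theorem LsP_cons (n : ℕ) (p : Fin (n+1) → Equiv.Perm (Fin 8)) (A B : ℕ) (a : Fin 8)
    (f : Fin n → Fin 8) :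
    LsP (n+1) p A B (Fin.cons a f) ↔
      (A.testBit a.val = false ∧ B.testBit (p 0 a).val = false) ∧
      LsP n (fun i => p i.succ) (A ||| 1 <<< a.val) (B ||| 1 <<< (p 0 a).val) f := by
  have h2 : (fun i => p i ((Fin.cons a f : Fin (n+1) → Fin 8) i)) =
      (Fin.cons (p 0 a) (fun i : Fin n => p i.succ (f i)) : Fin (n+1) → Fin 8) := by
    funext i
    refine Fin.cases ?_ (fun j => ?_) i <;> simp
  unfold LsP
  rw [h2, Fin.cons_injective_iff, Fin.cons_injective_iff]
  simp only [Fin.forall_fin_succ, Fin.cons_zero, Fin.cons_succ, ls_testBit_or, Set.mem_range,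
    not_exists, forall_and, ne_eq]
  tauto

theorem LsP_card_succ (n : ℕ) (p : Fin (n+1) → Equiv.Perm (Fin 8)) (A B : ℕ) :
    Nat.card {f // LsP (n+1) p A B f} =
      ∑ a : Fin 8, Nat.card {f // (A.testBit a.val = false ∧ B.testBit (p 0 a).val = false) ∧
      LsP n (fun i => p i.succ) (A ||| 1 <<< a.val) (B ||| 1 <<< (p 0 a).val) f} := by
  rw [← Nat.card_sigma]
  refine Nat.card_congr ?_
  refine ⟨fun f => ⟨f.1 0, fun i => f.1 i.succ, ?_⟩, fun x => ⟨Fin.cons x.1 x.2.1, ?_⟩, ?_, ?_⟩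
  · rw [← LsP_cons]
    have := f.2
    rwa [← Fin.cons_self_tail f.1] at this
  · rw [LsP_cons]; exact x.2.2
  · intro f
    apply Subtype.ext
    exact Fin.cons_self_tail f.1
  · rintro ⟨a, f, h⟩
    rfl

theorem lsStep_eq (n k A B : ℕ) (a b : Fin 8) (p : Fin n → Equiv.Perm (Fin 8)) (hb : b.val = lsT k a.val)
    (h : ∀ A B, Nat.card {f // LsP n p A B f} = lsCnt n A B) :
    Nat.card {f // (A.testBit a.val = false ∧ B.testBit b.val = false) ∧
      LsP n p (A ||| 1 <<< a.val) (B ||| 1 <<< b.val) f} = lsStep k A B a.val (lsCnt n) := by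
  unfold lsStep
  simp only [← hb]
  cases hA : A.testBit a.val
  · cases hB : B.testBit b.val
    · simp [h]
    · simp
  · simp

open Equiv in
/-- model permutation -/
def lsG : Equiv.Perm (Fin 8) := swap 0 1 * (swap 2 3 * List.formPerm [4, 5, 6, 7])

theorem lsT_eq : ∀ k a : Fin 8, ((lsG⁻¹ ^ k.val) a).val = lsT k.val a.val := by decide +kernel

theorem lsCnt_correct (n : ℕ) (hn : n ≤ 8) (A B : ℕ) :
    Nat.card {f // LsP n (fun i => lsG⁻¹ ^ (8 - n + i.val)) A B f} = lsCnt n A B := by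
  induction n generalizing A B with
  | zero =>
    have : ∀ f, LsP 0 (fun i => lsG⁻¹ ^ (8 - 0 + i.val)) A B f := fun f =>
      ⟨fun i => i.elim0, fun i => i.elim0, fun i => i.elim0, fun i => i.elim0⟩
    rw [Nat.card_congr (Equiv.subtypeUnivEquiv this)]
    simp [lsCnt]
  | succ n ih =>
    have h := ih (by omega)
    rw [LsP_card_succ]
    have e : (fun i : Fin n => lsG⁻¹ ^ (8 - (n+1) + i.succ.val)) =
        fun i : Fin n => lsG⁻¹ ^ (8 - n + i.val) := by
      funext i
      congr 1
      simp only [Fin.val_succ]; omega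
    rw [e]
    have e2 : 8 - (n+1) + (0 : Fin (n+1)).val = 7 - n := by simp
    simp only [e2]
    have := fun a : Fin 8 => lsStep_eq n (7-n) A B a ((lsG⁻¹ ^ (7 - n)) a) _
      (lsT_eq ⟨7-n, by omega⟩ a) h
    simp only [this]
    simp only [Fin.sum_univ_eight]
    rfl

theorem ls_card : Nat.card {f : Fin 8 → Fin 8 // Function.Injective f ∧
    Function.Injective (fun i => (lsG⁻¹ ^ i.val) (f i))} = 1408 := by
  rw [← lsCnt_eq, ← lsCnt_correct 8 le_rfl 0 0]
  simp [LsP]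

theorem lsG_pow : lsG ^ 8 = 1 := by decide +kernel

theorem lsG_type : lsG.cycleType = {2, 2, 4} := by
  have h4 : (List.formPerm [4, 5, 6, 7] : Equiv.Perm (Fin 8)).cycleType = {4} := by
    have hc := List.isCycle_formPerm (l := ([4, 5, 6, 7] : List (Fin 8))) (by decide) (by decide)
    have hs : (List.formPerm [4, 5, 6, 7] : Equiv.Perm (Fin 8)).support =
        ([4, 5, 6, 7] : List (Fin 8)).toFinset :=
      List.support_formPerm_of_nodup _ (by decide) (by simp)
    rw [hc.cycleType, hs, List.toFinset_card_of_nodup (by decide)]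
    simp
  unfold lsG
  rw [Equiv.Perm.Disjoint.cycleType_mul, Equiv.Perm.Disjoint.cycleType_mul, h4,
    Equiv.Perm.IsCycle.cycleType (Equiv.Perm.IsSwap.isCycle ⟨0, 1, by decide, rfl⟩),
    Equiv.Perm.IsCycle.cycleType (Equiv.Perm.IsSwap.isCycle ⟨2, 3, by decide, rfl⟩),
    Equiv.Perm.card_support_swap (by decide), Equiv.Perm.card_support_swap (by decide)]
  · rfl
  · unfold Equiv.Perm.Disjoint; decide +kernel
  · unfold Equiv.Perm.Disjoint; decide +kernel

theorem lsG_pow_succ (i : Fin 8) : lsG ^ (i + 1).val = lsG * lsG ^ i.val := by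
  revert i; decide +kernel

theorem lsG_pow_neg (i : Fin 8) : lsG ^ (-i).val = lsG⁻¹ ^ i.val := by
  revert i; decide +kernel

theorem ls_model_form (L : Fin 8 → Fin 8 → Fin 8) (h : IsAutotopism (finRotate 8) (finRotate 8) lsG L)
    (i j : Fin 8) : L i j = (lsG ^ i.val) (L 0 (j - i)) := by
  have key : ∀ (k : ℕ) (hk : k < 8) (j : Fin 8), L ⟨k, hk⟩ (j + ⟨k, hk⟩) = (lsG ^ k) (L 0 j) := by
    intro k
    induction k with
    | zero => intro hk j; simp
    | succ k ih =>
      intro hk j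
      have h1 := h ⟨k, by omega⟩ (j + ⟨k, by omega⟩)
      rw [ih, finRotate_apply, finRotate_apply, add_assoc] at h1
      have e : (⟨k, by omega⟩ : Fin 8) + 1 = ⟨k+1, hk⟩ := by
        apply Fin.ext
        simp [Fin.val_add]; omega
      rw [e] at h1
      rw [h1, pow_succ', Equiv.Perm.mul_apply]
  have := key i.val i.isLt (j - i)
  simpa using this

theorem ls_model : Nat.card {L : Fin 8 → Fin 8 → Fin 8 //
    IsLatinSquare L ∧ IsAutotopism (finRotate 8) (finRotate 8) lsG L} = 1408 := by
  rw [← ls_card]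
  refine Nat.card_congr ⟨fun L => ⟨L.1 0, ?_, ?_⟩,
    fun f => ⟨fun i j => (lsG ^ i.val) (f.1 (j - i)), ⟨?_, ?_⟩, ?_⟩, ?_, ?_⟩
  · exact (L.2.1.1 0).1
  · have h := ((L.2.1.2 0).1).comp neg_injective
    convert h using 2 with i
    simp only [Function.comp]
    rw [ls_model_form L.1 L.2.2 (-i) 0, lsG_pow_neg]
    simp
  · intro i
    apply Finite.injective_iff_bijective.1
    exact (lsG ^ i.val).injective.comp (f.2.1.comp (sub_left_injective))
  · intro j
    apply Finite.injective_iff_bijective.1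
    have e : (fun i : Fin 8 => (lsG ^ i.val) (f.1 (j - i))) =
      fun i => (lsG ^ j.val) ((lsG⁻¹ ^ (j - i).val) (f.1 (j - i))) := by
      funext i
      rw [← Equiv.Perm.mul_apply]
      congr 1
      revert i j; decide +kernel
    show Function.Injective (fun i : Fin 8 => (lsG ^ i.val) (f.1 (j - i)))
    rw [e]
    exact (lsG ^ j.val).injective.comp (f.2.2.comp sub_right_injective)
  · intro i j
    simp only [finRotate_apply, add_sub_add_right_eq_sub]
    exact congrArg (fun g : Equiv.Perm (Fin 8) => g (f.1 (j - i))) (lsG_pow_succ i)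
  · intro L
    apply Subtype.ext
    funext i j
    exact (ls_model_form L.1 L.2.2 i j).symm
  · intro f
    apply Subtype.ext
    funext j
    simp

theorem delta_88_224 (α β γ : Equiv.Perm (Fin 8))
    (hα : α.cycleType = {8}) (hβ : β.cycleType = {8}) (hγ : γ.cycleType = {2, 2, 4}) :
    Nat.card {L : Fin 8 → Fin 8 → Fin 8 // IsLatinSquare L ∧ IsAutotopism α β γ L} =
      1408 := by
  have hc : (finRotate 8).cycleType = {8} := cycleType_finRotate
  obtain ⟨u, hu⟩ := isConj_iff.1 (Equiv.Perm.isConj_iff_cycleType_eq.2 (hc.trans hα.symm))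
  obtain ⟨v, hv⟩ := isConj_iff.1 (Equiv.Perm.isConj_iff_cycleType_eq.2 (hc.trans hβ.symm))
  obtain ⟨w, hw⟩ := isConj_iff.1 (Equiv.Perm.isConj_iff_cycleType_eq.2 (lsG_type.trans hγ.symm))
  rw [← ls_model]
  symm
  refine Nat.card_congr (Equiv.subtypeEquiv
    (Equiv.arrowCongr u (Equiv.arrowCongr v w)) ?_)
  intro L
  have e : ∀ i j, (Equiv.arrowCongr u (Equiv.arrowCongr v w)) L i j = w (L (u.symm i) (v.symm j)) :=
    fun i j => rfl
  refine and_congr (and_congr ?_ ?_) ?_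
  · rw [← u.symm.forall_congr_right]
    refine forall_congr' fun i => ?_
    have : (Equiv.arrowCongr u (Equiv.arrowCongr v w)) L i = w ∘ L (u.symm i) ∘ v.symm := rfl
    rw [this, Equiv.comp_bijective, Equiv.bijective_comp]
  · rw [← v.symm.forall_congr_right]
    refine forall_congr' fun j => ?_
    have : (fun i => (Equiv.arrowCongr u (Equiv.arrowCongr v w)) L i j) =
      w ∘ (fun i => L i (v.symm j)) ∘ u.symm := rfl
    rw [this, Equiv.comp_bijective, Equiv.bijective_comp]
  · subst hu hv hw
    unfold IsAutotopism
    simp only [e]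
    rw [← u.symm.forall_congr_right]
    refine forall_congr' fun i => ?_
    rw [← v.symm.forall_congr_right]
    refine forall_congr' fun j => ?_
    simp [Equiv.Perm.mul_apply, Equiv.Perm.inv_def]
end

section
/- Let α, β, γ be permutations of {1,...,8} such that α and β are 8-cycles (cycle type {8}) and γ is a product of four disjoint 2-cycles (cycle type {2,2,2,2}). Then the number of Latin squares of order 8 having Θ = (α,β,γ) as an autotopism is 3456. -/
def gS : Equiv.Perm (Fin 8) :=
  Equiv.swap 0 1 * (Equiv.swap 2 3 * (Equiv.swap 4 5 * Equiv.swap 6 7))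

def pS (i : Fin 8) : Equiv.Perm (Fin 8) := if i.val % 2 = 1 then gS else 1

def oddS : Finset (Fin 8) := Finset.univ.filter fun i => i.val % 2 = 1

theorem gS_gS (x : Fin 8) : gS (gS x) = x := by revert x; decide

theorem pS_add (i j x : Fin 8) : pS (i + j) x = pS i (pS j x) := by
  revert i j x; decide +kernel

theorem gS_cycleType : gS.cycleType = {2, 2, 2, 2} := by
  unfold gS
  rw [Equiv.Perm.Disjoint.cycleType_mul, Equiv.Perm.Disjoint.cycleType_mul,
    Equiv.Perm.Disjoint.cycleType_mul,
    (Equiv.Perm.isSwap_iff_cycleType.1 ⟨0, 1, by decide, rfl⟩ : (Equiv.swap (0 : Fin 8) 1).cycleType = {2}),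
    (Equiv.Perm.isSwap_iff_cycleType.1 ⟨2, 3, by decide, rfl⟩ : (Equiv.swap (2 : Fin 8) 3).cycleType = {2}),
    (Equiv.Perm.isSwap_iff_cycleType.1 ⟨4, 5, by decide, rfl⟩ : (Equiv.swap (4 : Fin 8) 5).cycleType = {2}),
    (Equiv.Perm.isSwap_iff_cycleType.1 ⟨6, 7, by decide, rfl⟩ : (Equiv.swap (6 : Fin 8) 7).cycleType = {2})]
  · rfl
  all_goals (intro x; revert x; decide)

theorem card_reduce (α β γ α' β' γ' σ τ ρ : Equiv.Perm (Fin 8))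
    (h1 : σ * α * σ⁻¹ = α') (h2 : τ * β * τ⁻¹ = β') (h3 : ρ * γ * ρ⁻¹ = γ') :
    Nat.card {L : Fin 8 → Fin 8 → Fin 8 // IsLatinSquare L ∧ IsAutotopism α β γ L} =
    Nat.card {L : Fin 8 → Fin 8 → Fin 8 // IsLatinSquare L ∧ IsAutotopism α' β' γ' L} := by
  subst h1 h2 h3
  let e : (Fin 8 → Fin 8 → Fin 8) ≃ (Fin 8 → Fin 8 → Fin 8) :=
    Equiv.arrowCongr σ (Equiv.arrowCongr τ ρ)
  have he : ∀ L i j, e L i j = ρ (L (σ.symm i) (τ.symm j)) := fun L i j => rfl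
  refine Nat.card_congr (e.subtypeEquiv fun L => ?_)
  refine and_congr (and_congr ?_ ?_) ?_
  · have : ∀ i, e L i = ρ ∘ L (σ.symm i) ∘ τ.symm := fun i => rfl
    simp only [this, Equiv.comp_bijective, Equiv.bijective_comp]
    exact (Equiv.forall_congr_left σ)
  · have : ∀ j, (fun i => e L i j) = ρ ∘ (fun i => L i (τ.symm j)) ∘ σ.symm := fun i => rfl
    simp only [this, Equiv.comp_bijective, Equiv.bijective_comp]
    exact (Equiv.forall_congr_left τ)
  · unfold IsAutotopism
    simp only [he]
    rw [Equiv.forall_congr_left σ]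
    refine forall_congr' fun i => ?_
    rw [Equiv.forall_congr_left τ]
    refine forall_congr' fun j => ?_
    simp [Equiv.Perm.inv_def]

theorem auto_iff (L : Fin 8 → Fin 8 → Fin 8) :
    IsAutotopism (finRotate 8) (finRotate 8) gS L ↔
      ∀ i j, L i j = pS i (L 0 (j - i)) := by
  have hg : ∀ x, gS x = pS 1 x := fun x => rfl
  unfold IsAutotopism
  simp only [finRotate_apply, hg]
  constructor
  · intro h
    have key : ∀ n : ℕ, ∀ hn : n < 8, ∀ j, L ⟨n, hn⟩ j = pS ⟨n, hn⟩ (L 0 (j - ⟨n, hn⟩)) := by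
      intro n
      induction n with
      | zero => intro hn j; simp [pS]
      | succ k ih =>
        intro hn j
        have e1 : (⟨k + 1, hn⟩ : Fin 8) = 1 + ⟨k, by omega⟩ := by
          ext; simp [Fin.val_add]; omega
        have := h ⟨k, by omega⟩ (j - 1)
        rw [sub_add_cancel, add_comm, ih] at this
        rw [e1, this, pS_add, sub_sub]
    intro i j
    exact key i.val i.isLt j
  · intro h i j
    rw [h (i + 1), h i j, add_comm i 1, pS_add]
    congr 3
    abel

def Good (f : Equiv.Perm (Fin 8)) : Prop := (oddS.image f).image gS = oddS.image f

theorem good_iff (f : Equiv.Perm (Fin 8)) :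
    Function.Bijective (fun d => pS d (f d)) ↔ Good f := by
  have hodd : ∀ d, d ∈ oddS → pS d = gS := by
    intro d hd; simp [oddS] at hd; simp [pS, hd]
  have heven : ∀ d, d ∉ oddS → pS d = 1 := by
    intro d hd; simp [oddS] at hd; simp [pS, hd]
  have hm : ∀ d, f d ∈ oddS.image f ↔ d ∈ oddS := by
    intro d; simp
  constructor
  · intro h
    refine Finset.eq_of_subset_of_card_le ?_ ?_
    · intro y hy
      simp only [Finset.mem_image, exists_exists_and_eq_and] at hy
      obtain ⟨o, ho, rfl⟩ := hy
      obtain ⟨d, hd⟩ := f.surjective (gS (f o))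
      rw [← hd, hm]
      by_contra hne
      have : d = o := h.1 (by simp [hodd o ho, heven d hne, hd])
      exact hne (this ▸ ho)
    · rw [Finset.card_image_of_injective _ gS.injective]
  · intro h
    have key : ∀ d d', d ∈ oddS → d' ∉ oddS → pS d (f d) ≠ pS d' (f d') := by
      intro d d' hd hd' heq
      rw [hodd d hd, heven d' hd'] at heq
      apply hd'
      rw [← hm, ← h]
      exact Finset.mem_image.2 ⟨f d, (hm d).2 hd, heq⟩
    refine Finite.injective_iff_bijective.1 ?_
    intro d d' heq
    by_cases hd : d ∈ oddS <;> by_cases hd' : d' ∈ oddS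
    · simpa [hodd d hd, hodd d' hd'] using heq
    · exact absurd heq (key _ _ hd hd')
    · exact absurd heq.symm (key _ _ hd' hd)
    · simpa [heven d hd, heven d' hd'] using heq

theorem latin_iff (f : Fin 8 → Fin 8) :
    IsLatinSquare (fun i j => pS i (f (j - i))) ↔
      Function.Bijective f ∧ Function.Bijective (fun d => pS d (f d)) := by
  unfold IsLatinSquare
  refine and_congr ?_ ?_
  · have : ∀ i, (fun j => pS i (f (j - i))) = pS i ∘ f ∘ Equiv.subRight i := fun i => rfl
    simp only [this, Equiv.comp_bijective, Equiv.bijective_comp]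
    simp
  · have hp : ∀ j d, pS (j - d) = pS j * pS d := by
      intro j d
      ext1 x
      revert j d x
      decide +kernel
    have : ∀ j, (fun i => pS i (f (j - i))) =
        pS j ∘ (fun d => pS d (f d)) ∘ Equiv.subLeft j := by
      intro j
      funext i
      have := hp j (j - i)
      rw [sub_sub_cancel] at this
      simp [this]
    simp only [this, Equiv.comp_bijective, Equiv.bijective_comp]
    simp

theorem card_L :
    Nat.card {L : Fin 8 → Fin 8 → Fin 8 //
      IsLatinSquare L ∧ IsAutotopism (finRotate 8) (finRotate 8) gS L} =
    Nat.card {f : Equiv.Perm (Fin 8) // Good f} := by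
  have hp0 : ∀ x, pS 0 x = x := fun x => rfl
  symm
  refine Nat.card_congr (Equiv.ofBijective
    (fun f => ⟨fun i j => pS i (f.1 (j - i)), ?_, ?_⟩) ⟨?_, ?_⟩)
  · exact (latin_iff f.1).2 ⟨f.1.bijective, (good_iff f.1).2 f.2⟩
  · rw [auto_iff]; intro i j; simp [hp0]
  · intro f f' h
    have h := congrFun (congrArg Subtype.val h) 0
    ext x
    have := congrFun h x
    simp [hp0] at this
    rw [this]
  · rintro ⟨L, hL, hA⟩
    rw [auto_iff] at hA
    have e : L = fun i j => pS i (L 0 (j - i)) := by funext i j; exact hA i j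
    have h2 := hL
    rw [e] at h2
    have h2 := (latin_iff (L 0)).1 h2
    refine ⟨⟨Equiv.ofBijective (L 0) h2.1, (good_iff _).1 h2.2⟩, ?_⟩
    apply Subtype.ext
    exact e.symm

theorem fiber_card (S : Finset (Fin 8)) (hS : S.card = 4) :
    (Finset.univ.filter fun f : Equiv.Perm (Fin 8) => oddS.image f = S).card =
    (Finset.univ.filter fun f : Equiv.Perm (Fin 8) => oddS.image f = oddS).card := by
  have ho : oddS.card = S.card := by rw [hS]; rfl
  obtain ⟨σ, hσ⟩ : ∃ σ : Equiv.Perm (Fin 8), oddS.image σ = S := by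
    let e : {x // x ∈ oddS} ≃ {x // x ∈ S} := Finset.equivOfCardEq ho
    refine ⟨e.extendSubtype, ?_⟩
    refine Finset.eq_of_subset_of_card_le ?_ ?_
    · intro y hy
      obtain ⟨x, hx, rfl⟩ := Finset.mem_image.1 hy
      exact e.extendSubtype_mem x hx
    · rw [Finset.card_image_of_injective _ (Equiv.injective _), ho]
  symm
  refine Finset.card_equiv (Equiv.mulLeft σ) fun f => ?_
  simp only [Finset.mem_filter, Finset.mem_univ, true_and, Equiv.coe_mulLeft,
    Equiv.Perm.coe_mul, ← Finset.image_image]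
  rw [← hσ]
  exact (Finset.image_injective σ.injective).eq_iff.symm

theorem aux_576 (c N : ℕ) (F : Finset (Fin 8) → ℕ) (hF : ∀ S, S.card = 4 → F S = c)
    (h : N = ∑ S ∈ Finset.powersetCard 4 Finset.univ, F S) (hN : N = Nat.factorial 8) :
    c = 576 := by
  rw [Finset.sum_congr rfl (fun S hS => hF S (Finset.mem_powersetCard.1 hS).2),
    Finset.sum_const, Finset.card_powersetCard, Finset.card_univ,
    Fintype.card_fin, smul_eq_mul] at h
  have e1 : Nat.factorial 8 = 40320 := by norm_num [Nat.factorial]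
  have e2 : Nat.choose 8 4 = 70 := by norm_num [Nat.choose]
  rw [hN, e1, e2] at h
  omega

theorem perm_card : (Finset.univ : Finset (Equiv.Perm (Fin 8))).card = Nat.factorial 8 := by
  have h : ∀ n : ℕ, (Finset.univ : Finset (Equiv.Perm (Fin n))).card = Nat.factorial n := by
    intro n
    rw [Finset.card_univ, Fintype.card_perm, Fintype.card_fin]
  exact h 8

theorem fiber_sum : (Finset.univ : Finset (Equiv.Perm (Fin 8))).card =
    ∑ S ∈ Finset.powersetCard 4 Finset.univ,
      (Finset.univ.filter fun f : Equiv.Perm (Fin 8) => oddS.image f = S).card :=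
  Finset.card_eq_sum_card_fiberwise
    (s := (Finset.univ : Finset (Equiv.Perm (Fin 8))))
    (f := fun f : Equiv.Perm (Fin 8) => oddS.image f)
    (t := Finset.powersetCard 4 Finset.univ) (by
      intro f _
      simp only [Finset.mem_coe, Finset.mem_powersetCard, Finset.subset_univ, true_and]
      rw [Finset.card_image_of_injective _ f.injective]; rfl)

theorem fiber_card' (S : Finset (Fin 8)) (hS : S.card = 4) :
    (Finset.univ.filter fun f : Equiv.Perm (Fin 8) => oddS.image f = S).card = 576 :=
  (fiber_card S hS).trans (aux_576 _ _
    (fun S => (Finset.univ.filter fun f : Equiv.Perm (Fin 8) => oddS.image f = S).card)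
    fiber_card fiber_sum perm_card)

theorem six_card : ((Finset.powersetCard 4 (Finset.univ : Finset (Fin 8))).filter
        fun S => S.image gS = S).card = 6 := by decide +kernel

theorem card_good : Nat.card {f : Equiv.Perm (Fin 8) // Good f} = 3456 := by
  classical
  rw [Nat.card_eq_fintype_card, Fintype.card_subtype]
  have h := Finset.card_eq_sum_card_fiberwise
    (s := (Finset.univ.filter fun f : Equiv.Perm (Fin 8) => Good f))
    (f := fun f : Equiv.Perm (Fin 8) => oddS.image f)
    (t := (Finset.powersetCard 4 Finset.univ).filter fun S => S.image gS = S) (by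
      intro f hf
      simp only [Finset.coe_filter, Finset.mem_univ, true_and, Set.mem_ofPred_eq] at hf
      simp only [Finset.coe_filter, Set.mem_ofPred_eq, Finset.mem_powersetCard,
        Finset.subset_univ, true_and]
      refine ⟨?_, hf⟩
      rw [Finset.card_image_of_injective _ f.injective]; rfl)
  refine h.trans ((Finset.sum_congr rfl (g := fun _ => 576) ?_).trans ?_)
  · intro S hS
    simp only [Finset.mem_filter, Finset.mem_powersetCard] at hS
    refine Eq.trans ?_ (fiber_card' S hS.1.2)
    rw [Finset.filter_filter]
    congr 1
    ext f
    simp only [Finset.mem_filter, Finset.mem_univ, true_and, and_iff_right_iff_imp]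
    intro h
    unfold Good
    rw [h, hS.2]
  · refine (Finset.sum_const _).trans ?_
    have h6 := six_card
    refine (congrArg (fun n : ℕ => n • 576) (a₂ := 6) ?_).trans (by norm_num)
    convert h6

theorem delta_88_2222 (α β γ : Equiv.Perm (Fin 8))
    (hα : α.cycleType = {8}) (hβ : β.cycleType = {8}) (hγ : γ.cycleType = {2, 2, 2, 2}) :
    Nat.card {L : Fin 8 → Fin 8 → Fin 8 // IsLatinSquare L ∧ IsAutotopism α β γ L} =
      3456 := by
  have hr : (finRotate 8).cycleType = {8} := cycleType_finRotate
  obtain ⟨σ, h1⟩ := isConj_iff.1 (Equiv.Perm.isConj_iff_cycleType_eq.2 (hα.trans hr.symm))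
  obtain ⟨τ, h2⟩ := isConj_iff.1 (Equiv.Perm.isConj_iff_cycleType_eq.2 (hβ.trans hr.symm))
  obtain ⟨ρ, h3⟩ := isConj_iff.1
    (Equiv.Perm.isConj_iff_cycleType_eq.2 (hγ.trans gS_cycleType.symm))
  rw [card_reduce α β γ _ _ _ σ τ ρ h1 h2 h3, card_L, card_good]
end

section
/- Let α, β be permutations of {1,...,8} that are each a product of two disjoint 4-cycles (cycle type {4,4}) and let γ be the identity permutation of {1,...,8}. Then the number of Latin squares of order 8 having Θ = (α,β,γ) as an autotopism is 23224320. -/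
def aux_e0 : Bool × Fin 4 ≃ Fin 8 where
  toFun x := ⟨(if x.1 then 4 else 0) + x.2.val, by have := x.2.2; split <;> omega⟩
  invFun i := (decide (4 ≤ i.val), ⟨i.val % 4, by omega⟩)
  left_inv := by decide
  right_inv := by decide

theorem aux_conj (α : Equiv.Perm (Fin 8)) (hα : α.cycleType = {4, 4}) :
    ∃ e : Bool × Fin 4 ≃ Fin 8, ∀ p a, α (e (p, a)) = e (p, a + 1) := by
  have h1 : (c[0, 1, 2, 3] : Equiv.Perm (Fin 8)).cycleType = {4} := by
    have hc : (c[0, 1, 2, 3] : Equiv.Perm (Fin 8)).IsCycle :=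
      List.isCycle_formPerm (by decide) (by decide)
    rw [hc.cycleType]
    decide
  have h2 : (c[4, 5, 6, 7] : Equiv.Perm (Fin 8)).cycleType = {4} := by
    have hc : (c[4, 5, 6, 7] : Equiv.Perm (Fin 8)).IsCycle :=
      List.isCycle_formPerm (by decide) (by decide)
    rw [hc.cycleType]
    decide
  have hd : Equiv.Perm.Disjoint (c[0, 1, 2, 3] : Equiv.Perm (Fin 8)) c[4, 5, 6, 7] := by
    intro x
    revert x
    decide
  have h3 : ((c[0, 1, 2, 3] : Equiv.Perm (Fin 8)) * c[4, 5, 6, 7]).cycleType = {4, 4} := by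
    rw [hd.cycleType_mul, h1, h2]; rfl
  obtain ⟨σ, hσ⟩ := isConj_iff.1 (Equiv.Perm.isConj_of_cycleType_eq (h3.trans hα.symm))
  refine ⟨aux_e0.trans σ, fun p a => ?_⟩
  have key : ∀ p a, ((c[0, 1, 2, 3] : Equiv.Perm (Fin 8)) * c[4, 5, 6, 7] : Equiv.Perm (Fin 8)) (aux_e0 (p, a))
      = aux_e0 (p, a + 1) := by decide
  rw [← hσ]
  simp only [Equiv.trans_apply, ← key, Equiv.Perm.mul_apply]
  congr 3
  exact σ.symm_apply_apply _

/-- orbit representatives -/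
def auxG (x : (Bool × Fin 4 ≃ Fin 8) × Equiv.Perm (Fin 4) × Equiv.Perm (Fin 4)) :
    Bool → Bool → Fin 4 → Fin 8
  | false, q, d => x.1 (q, d)
  | true, false, d => x.1 (true, x.2.1 d)
  | true, true, d => x.1 (false, x.2.2 d)

theorem auxG_row (x) (p q q' d d') (h : auxG x p q d = auxG x p q' d') : q = q' ∧ d = d' := by
  cases p <;> cases q <;> cases q' <;> simp_all [auxG]

theorem auxG_col (x) (q p p' d d') (h : auxG x p q d = auxG x p' q d') : p = p' ∧ d = d' := by
  cases p <;> cases q <;> cases p' <;> simp_all [auxG]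

theorem auxG_inj (x y) (h : ∀ p q d, auxG x p q d = auxG y p q d) : x = y := by
  obtain ⟨g, π, ρ⟩ := x
  obtain ⟨g', π', ρ'⟩ := y
  have h1 : g = g' := by ext1 ⟨q, d⟩; exact h false q d
  subst h1
  have h2 : π = π' := by
    ext1 d
    simpa [auxG] using h true false d
  have h3 : ρ = ρ' := by
    ext1 d
    simpa [auxG] using h true true d
  rw [h2, h3]

theorem auxG_surj (f : Bool → Bool → Fin 4 → Fin 8)
    (hr : ∀ p q q' d d', f p q d = f p q' d' → q = q' ∧ d = d')
    (hc : ∀ q p p' d d', f p q d = f p' q d' → p = p' ∧ d = d') :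
    ∃ x, ∀ p q d, auxG x p q d = f p q d := by
  have hb : Function.Bijective (fun y : Bool × Fin 4 => f false y.1 y.2) := by
    rw [Fintype.bijective_iff_injective_and_card]
    refine ⟨?_, by simp⟩
    rintro ⟨q, d⟩ ⟨q', d'⟩ h
    obtain ⟨rfl, rfl⟩ := hr _ _ _ _ _ h
    rfl
  have ex : ∀ q d, ∃ d', f false (!q) d' = f true q d := by
    intro q d
    obtain ⟨⟨q', d'⟩, h⟩ := hb.2 (f true q d)
    simp only at h
    by_cases hq : q' = q
    · subst hq
      exact absurd (hc _ _ _ _ _ h).1 (by simp)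
    · have : q' = !q := by
        clear h
        revert q q'
        decide
      subst this
      exact ⟨d', h⟩
  choose π hπ using ex
  have hi : ∀ q, Function.Bijective (π q) := by
    intro q
    rw [← Finite.injective_iff_bijective]
    intro d d' h
    have := hπ q d
    rw [h, hπ q d'] at this
    exact (hr _ _ _ _ _ this).2.symm
  refine ⟨(Equiv.ofBijective _ hb, Equiv.ofBijective _ (hi false), Equiv.ofBijective _ (hi true)),
    fun p q d => ?_⟩
  cases p <;> cases q <;> simp [auxG]
  · exact hπ false d
  · exact hπ true d

theorem delta_4444_id (α β γ : Equiv.Perm (Fin 8))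
    (hα : α.cycleType = {4, 4}) (hβ : β.cycleType = {4, 4}) (hγ : γ = 1) :
    Nat.card {L : Fin 8 → Fin 8 → Fin 8 // IsLatinSquare L ∧ IsAutotopism α β γ L} =
      23224320 := by
  subst hγ
  obtain ⟨e, he⟩ := aux_conj α hα
  obtain ⟨e', he'⟩ := aux_conj β hβ
  have hes : ∀ i, e.symm (α i) = ((e.symm i).1, (e.symm i).2 + 1) := by
    intro i
    rw [Equiv.symm_apply_eq, ← he]
    simp
  have hes' : ∀ i, e'.symm (β i) = ((e'.symm i).1, (e'.symm i).2 + 1) := by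
    intro i
    rw [Equiv.symm_apply_eq, ← he']
    simp
  let Φ : (Bool × Fin 4 ≃ Fin 8) × Equiv.Perm (Fin 4) × Equiv.Perm (Fin 4) →
      Fin 8 → Fin 8 → Fin 8 := fun x i j =>
    auxG x (e.symm i).1 (e'.symm j).1 ((e'.symm j).2 - (e.symm i).2)
  have hΦ : ∀ x, IsLatinSquare (Φ x) ∧ IsAutotopism α β 1 (Φ x) := by
    intro x
    refine ⟨⟨fun i => ?_, fun j => ?_⟩, fun i j => ?_⟩
    · rw [← Finite.injective_iff_bijective]
      intro j j' h
      obtain ⟨h1, h2⟩ := auxG_row _ _ _ _ _ _ h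
      exact e'.symm.injective (Prod.ext h1 (sub_left_injective h2))
    · rw [← Finite.injective_iff_bijective]
      intro j j' h
      obtain ⟨h1, h2⟩ := auxG_col _ _ _ _ _ _ h
      exact e.symm.injective (Prod.ext h1 (sub_right_injective h2))
    · simp only [Φ, hes, hes', add_sub_add_right_eq_sub, Equiv.Perm.one_apply]
  have hbij : Function.Bijective (fun x => (⟨Φ x, hΦ x⟩ :
      {L : Fin 8 → Fin 8 → Fin 8 // IsLatinSquare L ∧ IsAutotopism α β 1 L})) := by
    constructor
    · intro x y h
      have h' : Φ x = Φ y := congrArg Subtype.val h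
      apply auxG_inj
      intro p q d
      have := congrFun (congrFun h' (e (p, 0))) (e' (q, d))
      simpa [Φ] using this
    · rintro ⟨L, ⟨hL1, hL2⟩, hA⟩
      have shift1 : ∀ p q a b, L (e (p, a + 1)) (e' (q, b + 1)) = L (e (p, a)) (e' (q, b)) := by
        intro p q a b
        rw [← he, ← he', hA]; rfl
      have shift : ∀ p q a b, L (e (p, a)) (e' (q, b)) = L (e (p, 0)) (e' (q, b - a)) := by
        intro p q a b
        have s1 := shift1 p q 0 (b - a)
        have s2 := shift1 p q (0 + 1) (b - a + 1)
        have s3 := shift1 p q (0 + 1 + 1) (b - a + 1 + 1)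
        have ha : a = 0 ∨ a = 1 ∨ a = 2 ∨ a = 3 := by clear * -; revert a; decide
        rw [s2, s1] at s3
        rw [s1] at s2
        rcases ha with rfl | rfl | rfl | rfl
        · simp
        · rw [← s1]; congr 3; clear * -; revert b; decide
        · rw [← s2]; congr 3; clear * -; revert b; decide
        · rw [← s3]; congr 3; clear * -; revert b; decide
      obtain ⟨x, hx⟩ := auxG_surj (fun p q d => L (e (p, 0)) (e' (q, d))) (by
          intro p q q' d d' h
          have := e'.injective ((hL1 _).1 h)
          simpa using this) (by
          intro q p p' d d' h
          have h1 : L (e (p, -d)) (e' (q, 0)) = L (e (p', -d')) (e' (q, 0)) := by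
            rw [shift p, shift p']
            simpa using h
          have := e.injective ((hL2 _).1 h1)
          simpa using this)
      refine ⟨x, Subtype.ext ?_⟩
      funext i j
      simp only [Φ]
      rw [hx, ← shift]
      simp
  rw [← Nat.card_congr (Equiv.ofBijective _ hbij), Nat.card_prod, Nat.card_prod,
    Nat.card_eq_fintype_card, Nat.card_eq_fintype_card, Fintype.card_equiv aux_e0,
    Fintype.card_perm]
  simp [Nat.factorial]
end

section
/- Let α, β, γ be permutations of {1,...,9} that are all 9-cycles (cycle type {9}). Then the number of Latin squares of order 9 having Θ = (α,β,γ) as an autotopism is 2025. -/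
def dTerm (k A B a : ℕ) (r : ℕ → ℕ → ℕ) : ℕ :=
  cond (A.testBit a) 0 (cond (B.testBit ((a + 8 * k) % 9)) 0
    (r (A ||| 2 ^ a) (B ||| 2 ^ ((a + 8 * k) % 9))))

def dCnt : ℕ → ℕ → ℕ → ℕ
  | 0, _, _ => 1
  | k + 1, A, B =>
    dTerm k A B 0 (dCnt k) + dTerm k A B 1 (dCnt k) + dTerm k A B 2 (dCnt k) +
    dTerm k A B 3 (dCnt k) + dTerm k A B 4 (dCnt k) + dTerm k A B 5 (dCnt k) +
    dTerm k A B 6 (dCnt k) + dTerm k A B 7 (dCnt k) + dTerm k A B 8 (dCnt k)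

theorem dCnt_val : dCnt 8 1 2 = 225 := by decide +kernel

def DP (k A B : ℕ) (f : Fin k → ZMod 9) : Prop :=
  Function.Injective f ∧ Function.Injective (fun i : Fin k => f i - ((i : ℕ) : ZMod 9)) ∧
    ∀ i, A.testBit (f i).val = false ∧ B.testBit (f i - ((i : ℕ) : ZMod 9)).val = false

theorem d_val (k : ℕ) (a : ZMod 9) : (a - (k : ZMod 9)).val = (a.val + 8 * k) % 9 := by
  have h : a - (k : ZMod 9) = ((a.val + 8 * k : ℕ) : ZMod 9) := by
    push_cast
    rw [ZMod.natCast_zmod_val]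
    have : (8 : ZMod 9) = -1 := by decide
    rw [this]; ring
  rw [h, ZMod.val_natCast]

theorem testBit_or_pow (A : ℕ) (a b : ZMod 9) :
    (A ||| 2 ^ a.val).testBit b.val = false ↔ A.testBit b.val = false ∧ b ≠ a := by
  rw [Nat.testBit_or, Nat.testBit_two_pow, Bool.or_eq_false_iff, decide_eq_false_iff_not]
  rw [(ZMod.val_injective 9).eq_iff, eq_comm (a := a)]

theorem DP_snoc (k A B : ℕ) (g : Fin k → ZMod 9) (a : ZMod 9) :
    DP (k + 1) A B (Fin.snoc (α := fun _ => ZMod 9) g a) ↔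
      (A.testBit a.val = false ∧ B.testBit (a - (k : ZMod 9)).val = false) ∧
      DP k (A ||| 2 ^ a.val) (B ||| 2 ^ (a - (k : ZMod 9)).val) g := by
  have e : (fun i : Fin (k+1) => (Fin.snoc (α := fun _ => ZMod 9) g a : Fin (k+1) → ZMod 9) i
      - ((i : ℕ) : ZMod 9)) =
      Fin.snoc (α := fun _ => ZMod 9) (fun i : Fin k => g i - ((i : ℕ) : ZMod 9))
        (a - (k : ZMod 9)) := by
    funext i
    refine Fin.lastCases ?_ (fun i => ?_) i <;> simp
  unfold DP
  rw [e, Fin.snoc_injective_iff, Fin.snoc_injective_iff, Fin.forall_fin_succ']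
  simp only [testBit_or_pow, Fin.snoc_castSucc, Fin.snoc_last, Fin.val_castSucc, Fin.val_last,
    Set.mem_range, not_exists]
  constructor
  · rintro ⟨⟨h1, h2⟩, ⟨h3, h4⟩, h5, h6⟩
    exact ⟨h6, h1, h3, fun i => ⟨⟨(h5 i).1, h2 i⟩, (h5 i).2, h4 i⟩⟩
  · rintro ⟨h6, h1, h3, h⟩
    exact ⟨⟨h1, fun i => (h i).1.2⟩, ⟨h3, fun i => (h i).2.2⟩,
      fun i => ⟨(h i).1.1, (h i).2.1⟩, h6⟩

def dEquiv (k A B : ℕ) : {f : Fin (k+1) → ZMod 9 // DP (k+1) A B f} ≃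
    Σ a : ZMod 9, {g : Fin k → ZMod 9 //
      (A.testBit a.val = false ∧ B.testBit (a - (k : ZMod 9)).val = false) ∧
      DP k (A ||| 2 ^ a.val) (B ||| 2 ^ (a - (k : ZMod 9)).val) g} where
  toFun f := ⟨f.1 (Fin.last k), fun i => f.1 i.castSucc, by
    rw [← DP_snoc]
    have := Fin.snoc_init_self (α := fun _ => ZMod 9) f.1
    unfold Fin.init at this
    rw [this]; exact f.2⟩
  invFun p := ⟨Fin.snoc (α := fun _ => ZMod 9) p.2.1 p.1, (DP_snoc _ _ _ _ _).2 p.2.2⟩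
  left_inv f := by
    apply Subtype.ext
    exact Fin.snoc_init_self (α := fun _ => ZMod 9) f.1
  right_inv p := by
    obtain ⟨a, g, h⟩ := p
    refine Sigma.subtype_ext ?_ ?_
    · simp
    · funext i
      simp

theorem card_DP (k : ℕ) : ∀ A B : ℕ, Nat.card {f : Fin k → ZMod 9 // DP k A B f} = dCnt k A B := by
  induction k with
  | zero =>
    intro A B
    rw [dCnt, Nat.card_eq_one_iff_unique]
    refine ⟨⟨fun x y => Subtype.ext (funext fun i => i.elim0)⟩,
      ⟨⟨fun i => i.elim0, fun i => i.elim0, fun i => i.elim0, fun i => i.elim0⟩⟩⟩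
  | succ k ih =>
    intro A B
    rw [Nat.card_congr (dEquiv k A B), Nat.card_sigma]
    have key : ∀ a : ZMod 9, Nat.card {g : Fin k → ZMod 9 //
      (A.testBit a.val = false ∧ B.testBit (a - (k : ZMod 9)).val = false) ∧
      DP k (A ||| 2 ^ a.val) (B ||| 2 ^ (a - (k : ZMod 9)).val) g} =
        dTerm k A B a.val (dCnt k) := by
      intro a
      unfold dTerm
      rw [← d_val, ← ih]
      cases hA : A.testBit a.val
      · cases hB : B.testBit (a - (k : ZMod 9)).val
        · simp
        · simp
      · simp
    rw [Finset.sum_congr rfl (fun a _ => key a)]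
    rw [dCnt]
    have hs : ∀ F : ℕ → ℕ, ∑ a : Fin 9, F a.val =
        F 0 + F 1 + F 2 + F 3 + F 4 + F 5 + F 6 + F 7 + F 8 := by
      intro F
      rw [Fin.sum_univ_eq_sum_range]
      simp [Finset.sum_range_succ]
    exact hs (fun a => dTerm k A B a (dCnt k))

theorem DP_shift (a : ZMod 9) (g : Fin 8 → ZMod 9) :
    DP 8 1 2 g ↔ ((Nat.testBit 0 a.val = false ∧
        Nat.testBit 0 (a - ((8 : ℕ) : ZMod 9)).val = false) ∧
      DP 8 (0 ||| 2 ^ a.val) (0 ||| 2 ^ (a - ((8 : ℕ) : ZMod 9)).val) (fun i => g i + a)) := by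
  have h1 : (1 : ℕ) = 0 ||| 2 ^ (0 : ZMod 9).val := by decide
  have h2 : (2 : ℕ) = 0 ||| 2 ^ (0 - ((8 : ℕ) : ZMod 9) : ZMod 9).val := by decide
  have e1 : ∀ x y : ZMod 9, x + a - y = (x - y) + a := fun x y => by ring
  have e2 : ∀ x y : ZMod 9, x + a = a - y ↔ x = 0 - y := fun x y =>
    ⟨fun h => by linear_combination h, fun h => by linear_combination h⟩
  have e3 : DP 8 1 2 g ↔ DP 8 (0 ||| 2 ^ (0 : ZMod 9).val)
      (0 ||| 2 ^ (0 - ((8 : ℕ) : ZMod 9) : ZMod 9).val) g := by rw [← h1, ← h2]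
  rw [e3]
  unfold DP
  simp only [testBit_or_pow, e1, Nat.zero_testBit, true_and, ne_eq, e2, Function.Injective,
    add_left_inj, add_eq_right]

theorem card_DP_nine : Nat.card {f : Fin 9 → ZMod 9 // DP 9 0 0 f} = 2025 := by
  rw [Nat.card_congr (dEquiv 8 0 0), Nat.card_sigma]
  have key : ∀ a : ZMod 9, Nat.card {g : Fin 8 → ZMod 9 //
      (Nat.testBit 0 a.val = false ∧ Nat.testBit 0 (a - ((8 : ℕ) : ZMod 9)).val = false) ∧
      DP 8 (0 ||| 2 ^ a.val) (0 ||| 2 ^ (a - ((8 : ℕ) : ZMod 9)).val) g} = 225 := by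
    intro a
    rw [← dCnt_val, ← card_DP]
    exact (Nat.card_congr (Equiv.subtypeEquiv
      (Equiv.piCongrRight fun _ : Fin 8 => Equiv.addRight a) (DP_shift a))).symm
  rw [Finset.sum_congr rfl (fun a _ => key a)]
  simp [ZMod.card]

theorem exists_coord (α : Equiv.Perm (Fin 9)) (h : α.cycleType = {9}) :
    ∃ u : ZMod 9 ≃ Fin 9, ∀ i, α (u i) = u (i + 1) := by
  have h2 : (finRotate 9).cycleType = α.cycleType := by
    rw [h]; exact cycleType_finRotate
  obtain ⟨c, hc⟩ := isConj_iff.1 (Equiv.Perm.isConj_iff_cycleType_eq.2 h2)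
  have key : ∀ i : Fin 9, α (c i) = c (i + 1) := by
    intro i
    rw [← hc, ← finRotate_apply]
    simp
  exact ⟨c, key⟩

theorem aut_formula {α β γ : Equiv.Perm (Fin 9)} {u v w : ZMod 9 ≃ Fin 9}
    (hu : ∀ i, α (u i) = u (i + 1)) (hv : ∀ i, β (v i) = v (i + 1))
    (hw : ∀ i, γ (w i) = w (i + 1)) {L : Fin 9 → Fin 9 → Fin 9} (hL : IsAutotopism α β γ L)
    (i j : ZMod 9) : L (u i) (v j) = w (w.symm (L (u 0) (v (j - i))) + i) := by
  have H : ∀ (n : ℕ) (j : ZMod 9),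
      L (u n) (v (j + n)) = w (w.symm (L (u 0) (v j)) + n) := by
    intro n
    induction n with
    | zero => intro j; simp
    | succ n ih =>
      intro j
      push_cast
      rw [← add_assoc, ← add_assoc, ← hu, ← hv, ← hw, hL, ih]
  have := H i.val (j - i)
  simpa using this

theorem dp_iff (f : Fin 9 → ZMod 9) :
    DP 9 0 0 f ↔ Function.Injective f ∧ Function.Injective (fun i : ZMod 9 => f i - i) := by
  have e : (fun i : Fin 9 => f i - ((i : ℕ) : ZMod 9)) = (fun i : ZMod 9 => f i - i) := by
    funext i
    exact congrArg (f i - ·) (ZMod.natCast_zmod_val (n := 9) i)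
  unfold DP
  rw [e]
  exact ⟨fun h => ⟨h.1, h.2.1⟩, fun h => ⟨h.1, h.2, fun i => by simp⟩⟩

theorem latin_iff_s17 {u v w : ZMod 9 ≃ Fin 9} {L : Fin 9 → Fin 9 → Fin 9} (f : ZMod 9 → ZMod 9)
    (h : ∀ i j, L (u i) (v j) = w (f (j - i) + i)) :
    IsLatinSquare L ↔ Function.Injective f ∧ Function.Injective (fun i : ZMod 9 => f i - i) := by
  unfold IsLatinSquare
  simp only [← Finite.injective_iff_bijective]
  constructor
  · rintro ⟨h1, h2⟩
    constructor
    · intro a b hab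
      apply v.injective
      apply h1 (u 0)
      rw [h, h]; simp [hab]
    · intro a b hab
      have : u (-a) = u (-b) := by
        apply h2 (v 0)
        change L _ _ = L _ _
        rw [h, h]
        simpa [sub_eq_add_neg] using hab
      simpa using this
  · rintro ⟨h1, h2⟩
    constructor
    · intro x a b hab
      obtain ⟨i, rfl⟩ := u.surjective x
      obtain ⟨a, rfl⟩ := v.surjective a
      obtain ⟨b, rfl⟩ := v.surjective b
      rw [h, h] at hab
      have := h1 (add_right_cancel (w.injective hab))
      rw [sub_left_inj.1 this]
    · intro y a b hab
      obtain ⟨j, rfl⟩ := v.surjective y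
      obtain ⟨a, rfl⟩ := u.surjective a
      obtain ⟨b, rfl⟩ := u.surjective b
      change L _ _ = L _ _ at hab
      rw [h, h] at hab
      have h3 := w.injective hab
      have := @h2 (j - a) (j - b) (by
        change f (j - a) - (j - a) = f (j - b) - (j - b)
        linear_combination h3)
      rw [sub_right_inj.1 this]

theorem delta_999 (α β γ : Equiv.Perm (Fin 9))
    (hα : α.cycleType = {9}) (hβ : β.cycleType = {9}) (hγ : γ.cycleType = {9}) :
    Nat.card {L : Fin 9 → Fin 9 → Fin 9 // IsLatinSquare L ∧ IsAutotopism α β γ L} =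
      2025 := by
  obtain ⟨u, hu⟩ := exists_coord α hα
  obtain ⟨v, hv⟩ := exists_coord β hβ
  obtain ⟨w, hw⟩ := exists_coord γ hγ
  rw [← card_DP_nine]
  refine Nat.card_congr
    { toFun := fun L => ⟨fun d : ZMod 9 => w.symm (L.1 (u 0) (v d)), ?_⟩
      invFun := fun f => ⟨fun x y => w (f.1 (v.symm y - u.symm x : ZMod 9) + u.symm x), ?_, ?_⟩
      left_inv := ?_
      right_inv := ?_ }
  · refine (dp_iff _).2 ?_
    exact (latin_iff_s17 _ (aut_formula hu hv hw L.2.2)).1 L.2.1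
  · refine (latin_iff_s17 (u := u) (v := v) (w := w) f.1 ?_).2 ((dp_iff _).1 f.2)
    intro i j
    simp
  · intro x y
    obtain ⟨i, rfl⟩ := u.surjective x
    obtain ⟨j, rfl⟩ := v.surjective y
    rw [hu, hv, hw]
    simp [add_assoc]
  · intro L
    apply Subtype.ext
    funext x y
    obtain ⟨i, rfl⟩ := u.surjective x
    obtain ⟨j, rfl⟩ := v.surjective y
    simp only [Equiv.symm_apply_apply]
    exact (aut_formula hu hv hw L.2.2 i j).symm
  · intro f
    apply Subtype.ext
    funext d
    simp only [Equiv.symm_apply_apply, sub_zero, add_zero]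
    exact congrArg f.1 (v.symm_apply_apply d)
end

section
/- Let α, β be permutations of {1,...,9} that are 9-cycles (cycle type {9}) and let γ be the identity permutation of {1,...,9}. Then the number of Latin squares of order 9 having Θ = (α,β,γ) as an autotopism is 362880. -/
lemma cyc_facts (α : Equiv.Perm (Fin 9)) (hα : α.cycleType = {9}) :
    orderOf α = 9 ∧ (∀ x y, ∃ k : ℤ, (α ^ k) x = y) ∧
      (∀ (k : ℤ) x, (α ^ k) x = x → α ^ k = 1) := by
  have hc : α.IsCycle := by
    rw [← Equiv.Perm.card_cycleType_eq_one, hα]; rfl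
  have hs : α.support.card = 9 := by
    rw [← Equiv.Perm.sum_cycleType, hα]; rfl
  have hu : α.support = Finset.univ := by
    rw [← Finset.card_eq_iff_eq_univ, hs]; rfl
  have hm : ∀ x, α x ≠ x := fun x => by
    rw [← Equiv.Perm.mem_support, hu]; exact Finset.mem_univ x
  have ht : ∀ x y, ∃ k : ℤ, (α ^ k) x = y := fun x y => hc.sameCycle (hm x) (hm y)
  refine ⟨by rw [hc.orderOf, hs], ht, ?_⟩
  intro k x h
  ext1 y
  obtain ⟨m, rfl⟩ := ht x y
  rw [← Equiv.Perm.mul_apply, ← zpow_add, add_comm, zpow_add, Equiv.Perm.mul_apply, h]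
  rfl

lemma transfer (α β : Equiv.Perm (Fin 9)) (hα : orderOf α = 9) (hβ : orderOf β = 9) (k : ℤ)
    (h : α ^ k = 1) : β ^ k = 1 := by
  rw [← orderOf_dvd_iff_zpow_eq_one] at h ⊢
  rwa [hβ, ← hα]

lemma auto_zpow (α β : Equiv.Perm (Fin 9)) (L : Fin 9 → Fin 9 → Fin 9)
    (h : IsAutotopism α β 1 L) (k : ℤ) : ∀ i j, L ((α ^ k) i) ((β ^ k) j) = L i j := by
  induction k using Int.induction_on with
  | zero => intro i j; simp
  | succ n ih =>
    intro i j
    rw [add_comm, zpow_add, zpow_add, zpow_one, zpow_one, Equiv.Perm.mul_apply,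
      Equiv.Perm.mul_apply, h, ih]
    rfl
  | pred n ih =>
    intro i j
    have := h ((α ^ (-(n:ℤ) - 1)) i) ((β ^ (-(n:ℤ) - 1)) j)
    rw [← Equiv.Perm.mul_apply, ← Equiv.Perm.mul_apply, ← zpow_one_add, ← zpow_one_add] at this
    rw [show (1 + (-(n:ℤ) - 1)) = -n by ring, ih] at this
    exact this.symm

theorem delta_99_id (α β γ : Equiv.Perm (Fin 9))
    (hα : α.cycleType = {9}) (hβ : β.cycleType = {9}) (hγ : γ = 1) :
    Nat.card {L : Fin 9 → Fin 9 → Fin 9 // IsLatinSquare L ∧ IsAutotopism α β γ L} =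
      362880 := by
  subst hγ
  obtain ⟨oα, tα, fα⟩ := cyc_facts α hα
  obtain ⟨oβ, tβ, fβ⟩ := cyc_facts β hβ
  choose k hk using tα 0
  have key : Function.Bijective
      (fun L : {L : Fin 9 → Fin 9 → Fin 9 // IsLatinSquare L ∧ IsAutotopism α β 1 L} =>
        Equiv.ofBijective (L.1 0) (L.2.1.1 0)) := by
    constructor
    · rintro ⟨L, hL, aL⟩ ⟨M, hM, aM⟩ h
      have h0 : L 0 = M 0 := by
        funext j
        exact congrArg (fun e : Equiv.Perm (Fin 9) => e j) h
      apply Subtype.ext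
      funext i j
      have h1 := auto_zpow α β L aL (k i) 0 ((β ^ (k i))⁻¹ j)
      have h2 := auto_zpow α β M aM (k i) 0 ((β ^ (k i))⁻¹ j)
      rw [hk, ← Equiv.Perm.mul_apply, mul_inv_cancel, Equiv.Perm.one_apply] at h1 h2
      show L i j = M i j
      rw [h1, h2, h0]
    · intro σ
      refine ⟨⟨fun i j => σ ((β ^ (k i))⁻¹ j), ⟨?_, ?_⟩, ?_⟩, ?_⟩
      · intro i
        exact σ.bijective.comp ((β ^ (k i))⁻¹).bijective
      · intro j
        apply Finite.injective_iff_bijective.mp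
        intro i i' h
        have h := σ.injective h
        have h1 : (β ^ (k i - k i')) j = j := by
          rw [← zpow_neg, ← zpow_neg] at h
          rw [sub_eq_add_neg, zpow_add, Equiv.Perm.mul_apply, ← h, ← Equiv.Perm.mul_apply,
            ← zpow_add]
          simp
        have h2 := transfer β α oβ oα _ (fβ _ _ h1)
        rw [zpow_sub, mul_inv_eq_one] at h2
        rw [← hk i, ← hk i', h2]
      · intro i j
        have h1 : (α ^ (-(k (α i)) + (1 + k i))) 0 = 0 := by
          rw [zpow_add, zpow_add, Equiv.Perm.mul_apply, Equiv.Perm.mul_apply, hk, zpow_one,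
            zpow_neg, Equiv.Perm.inv_eq_iff_eq, hk]
        have h2 := transfer α β oα oβ _ (fα _ _ h1)
        rw [zpow_add, zpow_neg, inv_mul_eq_one] at h2
        show σ ((β ^ (k (α i)))⁻¹ (β j)) = σ ((β ^ (k i))⁻¹ j)
        rw [h2, zpow_add, zpow_one, mul_inv_rev, ← Equiv.Perm.mul_apply _ β, inv_mul_cancel_right]
      · ext1 j
        have h1 := transfer α β oα oβ _ (fα _ _ (hk 0))
        show σ ((β ^ (k 0))⁻¹ j) = σ j
        rw [h1]; rfl
  rw [Nat.card_congr (Equiv.ofBijective _ key), Nat.card_eq_fintype_card, Fintype.card_perm]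
  rfl
end

section
/- Let α, β be permutations of {1,...,9} that are each a product of three disjoint 3-cycles (cycle type {3,3,3}) and let γ be the identity permutation of {1,...,9}. Then the number of Latin squares of order 9 having Θ = (α,β,γ) as an autotopism is 948109639680. -/
open Finset

namespace D333

/-- Rows and columns of the quotient array are injective. -/
def Good (f : Fin 3 → Fin 3 → Fin 3 → Fin 9) : Prop :=
  (∀ a b d b' d', f a b d = f a b' d' → b = b' ∧ d = d') ∧
  (∀ b a d a' d', f a b d = f a' b d' → a = a' ∧ d = d')

/-- The model permutation. -/
def c0 : Equiv.Perm (Fin 9) :=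
  (finProdFinEquiv (m := 3) (n := 3)).permCongr
    (Equiv.prodCongr (Equiv.refl _) (Equiv.addRight (1 : Fin 3)))

lemma c0_type : c0.cycleType = {3, 3, 3} := by
  have h3 : c0 ^ 3 = 1 := by decide
  have h1 : c0 ≠ 1 := by decide
  have : Fact (Nat.Prime 3) := ⟨by norm_num⟩
  have ho : orderOf c0 = 3 := orderOf_eq_prime h3 h1
  obtain ⟨n, hn⟩ := Equiv.Perm.cycleType_prime_order (σ := c0) (by rw [ho]; norm_num)
  have hs := Equiv.Perm.sum_cycleType c0
  have hsup : c0.support.card = 9 := by decide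
  rw [hn, hsup, ho, Multiset.sum_replicate, smul_eq_mul] at hs
  have : n = 2 := by omega
  subst this
  rw [hn, ho]; rfl

lemma coords (α : Equiv.Perm (Fin 9)) (hα : α.cycleType = {3, 3, 3}) :
    ∃ e : Fin 3 × Fin 3 ≃ Fin 9, ∀ a x, α (e (a, x)) = e (a, x + 1) := by
  have h : IsConj c0 α := Equiv.Perm.isConj_iff_cycleType_eq.2 (c0_type.trans hα.symm)
  obtain ⟨π, hπ⟩ := isConj_iff.1 h
  refine ⟨(finProdFinEquiv (m := 3) (n := 3)).trans π, fun a x => ?_⟩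
  rw [← hπ]
  simp [c0, Equiv.permCongr_apply]

lemma step1 (α β : Equiv.Perm (Fin 9)) (hα : α.cycleType = {3, 3, 3})
    (hβ : β.cycleType = {3, 3, 3}) :
    Nat.card {L : Fin 9 → Fin 9 → Fin 9 // IsLatinSquare L ∧ IsAutotopism α β 1 L} =
    Nat.card {f // Good f} := by
  obtain ⟨e, he⟩ := coords α hα
  obtain ⟨k, hk⟩ := coords β hβ
  have key : ∀ L : Fin 9 → Fin 9 → Fin 9, IsAutotopism α β 1 L → ∀ a x b y,
      L (e (a, x)) (k (b, y)) = L (e (a, 0)) (k (b, y - x)) := by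
    intro L hL a x b y
    have h : ∀ x y, L (e (a, x + 1)) (k (b, y + 1)) = L (e (a, x)) (k (b, y)) := by
      intro x y
      rw [← he, ← hk]; exact hL _ _
    have h1 : ∀ y, L (e (a, 1)) (k (b, y)) = L (e (a, 0)) (k (b, y - 1)) := by
      intro y
      have := h 0 (y - 1)
      simpa using this
    have h2 : ∀ y, L (e (a, 2)) (k (b, y)) = L (e (a, 0)) (k (b, y - 2)) := by
      intro y
      have := h 1 (y - 1)
      rw [h1, sub_add_cancel, sub_sub] at this
      exact this
    fin_cases x
    · simp
    · exact h1 y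
    · exact h2 y
  have inj2 : ∀ (e : Fin 3 × Fin 3 ≃ Fin 9) a x a' x', e (a, x) = e (a', x') → a = a' ∧ x = x' := by
    intro e a x a' x' h
    simpa using e.injective h
  refine Nat.card_congr ⟨fun L => ⟨fun a b d => L.1 (e (a, 0)) (k (b, d)), ?_, ?_⟩,
    fun f => ⟨fun i j => f.1 (e.symm i).1 (k.symm j).1 ((k.symm j).2 - (e.symm i).2), ⟨?_, ?_⟩, ?_⟩,
    ?_, ?_⟩
  · intro a b d b' d' h
    exact inj2 k _ _ _ _ ((L.2.1.1 _).injective h)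
  · intro b a d a' d' h
    have h' : L.1 (e (a, -d)) (k (b, 0)) = L.1 (e (a', -d')) (k (b, 0)) := by
      rw [key L.1 L.2.2 a (-d) b 0, key L.1 L.2.2 a' (-d') b 0]; simpa using h
    have := inj2 e _ _ _ _ ((L.2.1.2 _).injective h')
    simpa using this
  · intro i
    rw [← Finite.injective_iff_bijective]
    intro j j' h
    obtain ⟨h1, h2⟩ := f.2.1 _ _ _ _ _ h
    exact k.symm.injective (Prod.ext h1 (by simpa using h2))
  · intro j
    rw [← Finite.injective_iff_bijective]
    intro i i' h
    obtain ⟨h1, h2⟩ := f.2.2 _ _ _ _ _ h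
    exact e.symm.injective (Prod.ext h1 (by simpa using h2))
  · intro i j
    obtain ⟨⟨a, x⟩, rfl⟩ := e.surjective i
    obtain ⟨⟨b, y⟩, rfl⟩ := k.surjective j
    simp [he, hk]
  · rintro ⟨L, hL⟩
    ext i j
    obtain ⟨⟨a, x⟩, rfl⟩ := e.surjective i
    obtain ⟨⟨b, y⟩, rfl⟩ := k.surjective j
    simp [key L hL.2 a x b y]
  · rintro ⟨f, hf⟩
    ext a b d
    simp

/-- Arrays with a prescribed cell pattern. -/
abbrev Pat (c : Fin 9 → Equiv.Perm (Fin 3)) : Type :=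
  ∀ a b : Fin 3, Fin 3 ≃ {s : Fin 9 // c s a = b}

lemma step2 : Nat.card {f // Good f} = Nat.card (Σ c, Pat c) := by
  symm
  let F : (Σ c, Pat c) → {f // Good f} := fun p => ⟨fun a b d => (p.2 a b d).1, by
    constructor
    · intro a b d b' d' h
      change (p.2 a b d).1 = (p.2 _ _ d').1 at h
      have h1 := (p.2 a b d).2
      have h2 := (p.2 a b' d').2
      have hb : b = b' := by rw [← h1, ← h2, h]
      subst hb
      exact ⟨rfl, (p.2 a b).injective (Subtype.ext h)⟩
    · intro b a d a' d' h
      change (p.2 a b d).1 = (p.2 _ _ d').1 at h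
      have h1 := (p.2 a b d).2
      have h2 := (p.2 a' b d').2
      rw [← h] at h2
      have hb : a = a' := (p.1 _).injective (h1.trans h2.symm)
      subst hb
      exact ⟨rfl, (p.2 a b).injective (Subtype.ext h)⟩⟩
  refine Nat.card_congr (Equiv.ofBijective F ⟨?_, ?_⟩)
  · rintro ⟨c, p⟩ ⟨c', p'⟩ h
    have h0 : ∀ a b d, (p a b d).1 = (p' a b d).1 := fun a b d =>
      congrFun (congrFun (congrFun (congrArg Subtype.val h) a) b) d
    have hc : c = c' := by
      funext s
      ext1 a
      obtain ⟨d, hd⟩ := (p a (c s a)).surjective ⟨s, rfl⟩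
      have h1 := h0 a (c s a) d
      have h2 := (p' a (c s a) d).2
      rw [← h1, hd] at h2
      exact h2.symm
    subst hc
    congr 1
    funext a b
    ext d : 2
    exact h0 a b d
  · rintro ⟨f, hf⟩
    have hrow : ∀ a, Function.Bijective (fun q : Fin 3 × Fin 3 => f a q.1 q.2) := by
      intro a
      rw [Fintype.bijective_iff_injective_and_card]
      refine ⟨?_, by simp⟩
      rintro ⟨b, d⟩ ⟨b', d'⟩ h
      obtain ⟨rfl, rfl⟩ := hf.1 _ _ _ _ _ h
      rfl
    have hex : ∀ s a, ∃ q : Fin 3 × Fin 3, f a q.1 q.2 = s := fun s a => (hrow a).surjective s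
    choose q hq using hex
    have hqb : ∀ a b d, q (f a b d) a = (b, d) := fun a b d =>
      (hrow a).injective (hq (f a b d) a)
    have hinj : ∀ s, Function.Bijective (fun a => (q s a).1) := by
      intro s
      rw [← Finite.injective_iff_bijective]
      intro a a' h
      have h1 := hq s a
      have h2 := hq s a'
      simp only at h
      rw [← h] at h2
      exact (hf.2 _ _ _ _ _ (h1.trans h2.symm)).1
    let c : Fin 9 → Equiv.Perm (Fin 3) := fun s => Equiv.ofBijective _ (hinj s)
    have hb : ∀ a b, Function.Bijective (fun d => (⟨f a b d, by
        show (q (f a b d) a).1 = b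
        rw [hqb]⟩ : {s : Fin 9 // c s a = b})) := by
      intro a b
      constructor
      · intro d d' h
        exact (hf.1 _ _ _ _ _ (congrArg Subtype.val h)).2
      · rintro ⟨s, hs⟩
        refine ⟨(q s a).2, Subtype.ext ?_⟩
        have hs' : (q s a).1 = b := hs
        have := hq s a
        rw [hs'] at this
        exact this
    exact ⟨⟨c, fun a b => Equiv.ofBijective _ (hb a b)⟩, rfl⟩

lemma card_pat (c : Fin 9 → Equiv.Perm (Fin 3)) :
    Nat.card (Pat c) = if ∀ a b, #{s | c s a = b} = 3 then 6 ^ 9 else 0 := by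
  split_ifs with h
  · have h1 : ∀ a b, Nat.card (Fin 3 ≃ {s : Fin 9 // c s a = b}) = 6 := by
      intro a b
      have : Fintype.card (Fin 3) = Fintype.card {s : Fin 9 // c s a = b} := by
        rw [Fintype.card_subtype, h a b]; simp
      rw [Nat.card_eq_fintype_card, Fintype.card_equiv (Fintype.equivOfCardEq this)]
      rfl
    unfold Pat
    rw [Nat.card_pi]
    simp_rw [Nat.card_pi, h1]
    simp
  · have : IsEmpty (Pat c) := ⟨fun p => h fun a b => by
      have := Fintype.card_congr (p a b)
      rw [Fintype.card_subtype] at this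
      simpa using this.symm⟩
    simp

lemma sum_ind {ι : Type} [Fintype ι] (P : ι → Prop) [DecidablePred P] (N m : ℕ)
    (h : #{c | P c} = m) (g : ι → ℕ) (hg : ∀ c, g c = if P c then N else 0) :
    ∑ c, g c = N * m := by
  simp_rw [hg]
  rw [← Finset.sum_filter, Finset.sum_const, smul_eq_mul, mul_comm, h]

lemma step3 (m : ℕ)
    (h : #{c : Fin 9 → Equiv.Perm (Fin 3) | ∀ a b, #{s | c s a = b} = 3} = m) :
    Nat.card (Σ c, Pat c) = 6 ^ 9 * m := by
  have h1 : Nat.card (Σ c, Pat c) = ∑ c, Nat.card (Pat c) := Nat.card_sigma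
  exact h1.trans (sum_ind _ _ _ h _ card_pat)

lemma card_cons {κ : Type} [Fintype κ] [DecidableEq κ] (m : ℕ) (P : (Fin (m + 1) → κ) → Prop)
    [DecidablePred P] :
    #{c | P c} = ∑ j : κ, #{c : Fin m → κ | P (Fin.cons j c)} := by
  simp only [Finset.card_filter]
  rw [← (Fin.consEquiv (fun _ => κ)).sum_comp, Fintype.sum_prod_type]
  rfl

lemma multi {κ : Type} [Fintype κ] [DecidableEq κ] (m : ℕ) (v : κ → ℕ) (hv : ∑ k, v k = m) :
    #{c : Fin m → κ | ∀ k, #{s | c s = k} = v k} * ∏ k, (v k).factorial = m.factorial := by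
  induction m generalizing v with
  | zero =>
    have : ∀ k, v k = 0 := by simpa using hv
    simp [this]
  | succ m ih =>
    have hsum : #{c : Fin (m + 1) → κ | ∀ k, #{s | c s = k} = v k} =
        ∑ j, #{c : Fin m → κ | ∀ k, (if j = k then 1 else 0) + #{s | c s = k} = v k} := by
      rw [card_cons]
      simp only [Fin.card_filter_univ_succ', Fin.cons_zero, Fin.cons_succ]
    rw [hsum, Finset.sum_mul]
    have hj : ∀ j, #{c : Fin m → κ | ∀ k, (if j = k then 1 else 0) + #{s | c s = k} = v k} *
        ∏ k, (v k).factorial = v j * m.factorial := by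
      intro j
      rcases Nat.eq_zero_or_pos (v j) with h0 | hpos
      · rw [h0, zero_mul]
        convert zero_mul _
        rw [Finset.card_eq_zero, Finset.filter_eq_empty_iff]
        intro c _ hc
        have := hc j
        simp [h0] at this
      · have hw : ∑ k, Function.update v j (v j - 1) k = m := by
          rw [Finset.sum_update_of_mem (mem_univ j)]
          rw [← Finset.add_sum_erase _ _ (mem_univ j)] at hv
          rw [Finset.sdiff_singleton_eq_erase]
          omega
        have := ih _ hw
        have hp : ∏ k, (v k).factorial =
            v j * ∏ k, (Function.update v j (v j - 1) k).factorial := by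
          rw [← Finset.mul_prod_erase _ _ (mem_univ j), ← Finset.mul_prod_erase univ
            (fun k => (Function.update v j (v j - 1) k).factorial) (mem_univ j), ← mul_assoc]
          congr 1
          · simp [Nat.mul_factorial_pred hpos.ne']
          · refine Finset.prod_congr rfl fun k hk => ?_
            rw [Function.update_of_ne (Finset.ne_of_mem_erase hk)]
        rw [hp, ← this, mul_left_comm]
        congr 3
        ext c
        simp only [mem_filter, mem_univ, true_and]
        refine forall_congr' fun k => ?_
        by_cases hk : j = k
        · subst hk; simp; omega
        · rw [Function.update_of_ne (Ne.symm hk)]; simp [hk]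
    simp_rw [hj]
    rw [← Finset.sum_mul, hv, Nat.factorial_succ]

/-- The four admissible multiplicity vectors. -/
def w (k : Fin 4) (σ : Equiv.Perm (Fin 3)) : ℕ := if Equiv.Perm.sign σ = 1 then k.1 else 3 - k.1

lemma cell (c : Fin 9 → Equiv.Perm (Fin 3)) (a b : Fin 3) :
    #{s | c s a = b} = ∑ σ with σ a = b, #{s | c s = σ} := by
  rw [Finset.card_eq_sum_card_fiberwise (f := c) (t := {σ | σ a = b})]
  · refine Finset.sum_congr rfl fun σ hσ => ?_
    congr 1
    ext s
    simp only [mem_filter, mem_univ, true_and] at hσ ⊢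
    constructor
    · exact fun h => h.2
    · rintro rfl; exact ⟨hσ, rfl⟩
  · intro s hs
    simpa using hs

lemma linsys (v : Equiv.Perm (Fin 3) → ℕ) :
    (∀ a b : Fin 3, ∑ σ with σ a = b, v σ = 3) ↔ ∃ k, v = w k := by
  constructor
  · intro h
    let r : Equiv.Perm (Fin 3) := finRotate 3
    have key : ∀ (a b : Fin 3) (σ τ : Equiv.Perm (Fin 3)), σ ≠ τ →
        ({ρ | ρ a = b} : Finset (Equiv.Perm (Fin 3))) = {σ, τ} → v σ + v τ = 3 := by
      intro a b σ τ hne he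
      rw [← h a b, he, Finset.sum_pair hne]
    have k1 := key 0 0 1 (Equiv.swap 1 2) (by decide) (by decide)
    have k2 := key 1 1 1 (Equiv.swap 0 2) (by decide) (by decide)
    have k3 := key 2 2 1 (Equiv.swap 0 1) (by decide) (by decide)
    have k4 := key 0 1 r (Equiv.swap 0 1) (by decide) (by decide)
    have k5 := key 0 2 (r ^ 2) (Equiv.swap 0 2) (by decide) (by decide)
    refine ⟨⟨v 1, by omega⟩, ?_⟩
    have hall : ∀ σ : Equiv.Perm (Fin 3), σ = 1 ∨ σ = r ∨ σ = r ^ 2 ∨ σ = Equiv.swap 0 1 ∨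
      σ = Equiv.swap 0 2 ∨ σ = Equiv.swap 1 2 := by decide
    have s1 : Equiv.Perm.sign (1 : Equiv.Perm (Fin 3)) = 1 := by decide
    have s2 : Equiv.Perm.sign r = 1 := by decide
    have s3 : Equiv.Perm.sign (r ^ 2) = 1 := by decide
    have s4 : Equiv.Perm.sign (Equiv.swap (0 : Fin 3) 1) ≠ 1 := by decide
    have s5 : Equiv.Perm.sign (Equiv.swap (0 : Fin 3) 2) ≠ 1 := by decide
    have s6 : Equiv.Perm.sign (Equiv.swap (1 : Fin 3) 2) ≠ 1 := by decide
    funext σ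
    unfold w
    rcases hall σ with rfl | rfl | rfl | rfl | rfl | rfl
    · rw [if_pos s1]
    · rw [if_pos s2]; dsimp only; omega
    · rw [if_pos s3]; dsimp only; omega
    · rw [if_neg s4]; dsimp only; omega
    · rw [if_neg s5]; dsimp only; omega
    · rw [if_neg s6]; dsimp only; omega
  · rintro ⟨k, rfl⟩
    revert k
    decide

lemma w_inj : Function.Injective w := by
  intro k k' h
  have := congrFun h 1
  simp [w] at this
  exact Fin.ext this

lemma card_w (k : Fin 4) (p n : ℕ) (hp : ∏ σ, (w k σ).factorial = p)
    (hn : n * p = Nat.factorial 9 ∧ 0 < p) :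
    #{c : Fin 9 → Equiv.Perm (Fin 3) | ∀ σ, #{s | c s = σ} = w k σ} = n := by
  have hs : ∀ k, ∑ σ, w k σ = 9 := by decide
  have hm := multi 9 (w k) (hs k)
  rw [hp, ← hn.1] at hm
  exact Nat.eq_of_mul_eq_mul_right hn.2 hm

lemma step4_aux (n : Fin 4 → ℕ)
    (hn : ∀ k, #{c : Fin 9 → Equiv.Perm (Fin 3) | ∀ σ, #{s | c s = σ} = w k σ} = n k)
    (N : ℕ) (hN : ∑ k, n k = N) :
    #{c : Fin 9 → Equiv.Perm (Fin 3) | ∀ a b, #{s | c s a = b} = 3} = N := by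
  have h : ({c : Fin 9 → Equiv.Perm (Fin 3) | ∀ a b, #{s | c s a = b} = 3} : Finset _) =
      (univ : Finset (Fin 4)).biUnion
        (fun k => {c : Fin 9 → Equiv.Perm (Fin 3) | ∀ σ, #{s | c s = σ} = w k σ}) := by
    ext c
    simp only [mem_filter, mem_univ, true_and, mem_biUnion]
    simp_rw [cell]
    rw [linsys (fun σ => #{s | c s = σ})]
    simp only [funext_iff]
  rw [h, Finset.card_biUnion]
  · exact (Finset.sum_congr rfl fun k _ => hn k).trans hN
  · intro k _ k' _ hne
    rw [Function.onFun, Finset.disjoint_left]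
    intro c hc hc'
    simp only [mem_filter, mem_univ, true_and] at hc hc'
    exact hne (w_inj (funext fun σ => (hc σ).symm.trans (hc' σ)))

/-- Product of factorials of the multiplicities. -/
def pv : Fin 4 → ℕ := ![216, 8, 8, 216]

/-- Number of patterns for each multiplicity vector. -/
def nv : Fin 4 → ℕ := ![1680, 45360, 45360, 1680]

lemma step4 : #{c : Fin 9 → Equiv.Perm (Fin 3) | ∀ a b, #{s | c s a = b} = 3} = 94080 :=
  step4_aux nv (fun k => card_w k (pv k) (nv k) (by revert k; decide) (by revert k; decide))
    94080 (by decide)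

end D333

theorem delta_333333_id (α β γ : Equiv.Perm (Fin 9))
    (hα : α.cycleType = {3, 3, 3}) (hβ : β.cycleType = {3, 3, 3}) (hγ : γ = 1) :
    Nat.card {L : Fin 9 → Fin 9 → Fin 9 // IsLatinSquare L ∧ IsAutotopism α β γ L} =
      948109639680 := by
  subst hγ
  rw [D333.step1 α β hα hβ, D333.step2, D333.step3 _ D333.step4]
  norm_num
end
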